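/- arXiv:2403.17262 — 8 statements merged into one kernel-verified Lean document; each statement's English description precedes it below -/
import Mathlib

section
/- Let F, U ⊂ ℝⁿ be nonempty finite sets with 0 in the interior of conv U (and n ≥ 1). Then sup{c ∈ (0,1) : (−(c/(1−c))·conv F) ∩ conv U ≠ ∅} equals 1 if 0 ∈ conv F, and equals [1 − min_{|ν|=1} h_F(ν)/h_U(ν)]^{−1} if 0 ∉ conv F (the minimum being over unit vectors ν, where h_U(ν) > 0 for all such ν). -/
open scoped RealInnerProductSpace Pointwise

theorem sep_unit {n : ℕ} {A B : Set (EuclideanSpace ℝ (Fin n))}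
    (hA : Convex ℝ A) (hAc : IsCompact A) (hB : Convex ℝ B) (hBc : IsCompact B)
    (hAn : A.Nonempty) (hBn : B.Nonempty) (hd : Disjoint A B) :
    ∃ (ν : EuclideanSpace ℝ (Fin n)) (u : ℝ), ‖ν‖ = 1 ∧ (∀ a ∈ A, ⟪a, ν⟫ < u) ∧
      ∀ b ∈ B, u < ⟪b, ν⟫ := by
  obtain ⟨f, u, v, h1, huv, h2⟩ := geometric_hahn_banach_compact_closed hA hAc hB hBc.isClosed hd
  obtain ⟨w, rfl⟩ := (InnerProductSpace.toDual ℝ (EuclideanSpace ℝ (Fin n))).surjective f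
  simp only [InnerProductSpace.toDual_apply_apply] at h1 h2
  have hw : w ≠ 0 := by
    rintro rfl
    obtain ⟨a, ha⟩ := hAn
    obtain ⟨b, hb⟩ := hBn
    have := h1 a ha
    have := h2 b hb
    simp at *
    linarith
  have hp : 0 < ‖w‖ := norm_pos_iff.mpr hw
  have hp' : 0 < ‖w‖⁻¹ := inv_pos.mpr hp
  refine ⟨‖w‖⁻¹ • w, ‖w‖⁻¹ * u, ?_, ?_, ?_⟩
  · rw [norm_smul, norm_inv, norm_norm, inv_mul_cancel₀ hp.ne']
  · intro a ha
    rw [inner_smul_right, real_inner_comm]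
    exact mul_lt_mul_of_pos_left (h1 a ha) hp'
  · intro b hb
    rw [inner_smul_right, real_inner_comm]
    exact mul_lt_mul_of_pos_left (huv.trans (h2 b hb)) hp'

theorem le_supp {n : ℕ} (F : Finset (EuclideanSpace ℝ (Fin n))) (hF : F.Nonempty)
    (ν x : EuclideanSpace ℝ (Fin n)) (hx : x ∈ convexHull ℝ (F : Set (EuclideanSpace ℝ (Fin n)))) :
    ⟪x, ν⟫ ≤ F.sup' hF fun a => ⟪a, ν⟫ := by
  have hc : Convex ℝ {y : EuclideanSpace ℝ (Fin n) | ⟪y, ν⟫ ≤ F.sup' hF fun a => ⟪a, ν⟫} := by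
    refine convex_halfSpace_le ⟨?_, ?_⟩ _
    · intro x y; exact inner_add_left _ _ _
    · intro c x; exact real_inner_smul_left _ _ _
  exact convexHull_min (fun a ha => Finset.le_sup' (fun a => ⟪a, ν⟫) (Finset.mem_coe.mp ha)) hc hx

theorem meets_iff {n : ℕ} (F U : Finset (EuclideanSpace ℝ (Fin n))) (hF : F.Nonempty)
    (hU : U.Nonempty) (s : ℝ) (hs : 0 < s) :
    (((-s) • convexHull ℝ (F : Set (EuclideanSpace ℝ (Fin n)))) ∩
          convexHull ℝ (U : Set (EuclideanSpace ℝ (Fin n)))).Nonempty ↔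
    ∀ ν : EuclideanSpace ℝ (Fin n), ‖ν‖ = 1 →
      0 ≤ s * (F.sup' hF fun a => ⟪a, ν⟫) + (U.sup' hU fun a => ⟪a, ν⟫) := by
  constructor
  · rintro ⟨x, ⟨f, hf, rfl⟩, hx⟩ ν -
    have h1 := le_supp F hF ν f hf
    have h2 := le_supp U hU ν _ hx
    simp only [real_inner_smul_left] at h2
    nlinarith
  · intro h
    by_contra hne
    have hd := Set.disjoint_iff_inter_eq_empty.mpr (Set.not_nonempty_iff_eq_empty.mp hne)
    obtain ⟨ν, u, hν, h1, h2⟩ := sep_unit (convex_convexHull ℝ _)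
      (U.finite_toSet.isCompact_convexHull (𝕜 := ℝ)) ((convex_convexHull ℝ _).smul (-s))
      ((F.finite_toSet.isCompact_convexHull (𝕜 := ℝ)).smul (-s))
      (hU.coe_sort.elim fun a => ⟨a, subset_convexHull ℝ _ a.2⟩)
      (Set.Nonempty.smul_set (hF.coe_sort.elim fun a => ⟨a, subset_convexHull ℝ _ a.2⟩)) hd.symm
    have hh := h ν hν
    obtain ⟨a, ha, ea⟩ := F.exists_mem_eq_sup' hF (fun a => ⟪a, ν⟫)
    obtain ⟨b, hb, eb⟩ := U.exists_mem_eq_sup' hU (fun a => ⟪a, ν⟫)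
    rw [ea, eb] at hh
    have h3 := h1 b (subset_convexHull ℝ _ hb)
    have h4 := h2 ((-s) • a) (Set.smul_mem_smul_set (subset_convexHull ℝ _ ha))
    rw [real_inner_smul_left] at h4
    linarith

/-- Corollary 6.4 of the paper. For nonempty finite `F, U ⊂ ℝⁿ`
with `0 ∈ int (conv U)`, the quantity
`sup {c ∈ (0,1) : (−(c/(1−c))·conv F) ∩ conv U ≠ ∅}` equals `1` when `0 ∈ conv F`,
and equals `[1 − min_{|ν|=1} h_F(ν)/h_U(ν)]⁻¹` when `0 ∉ conv F`. -/
theorem sup_dilation_meets_convexHull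
    (n : ℕ) (hn : 0 < n)
    (F U : Finset (EuclideanSpace ℝ (Fin n))) (hF : F.Nonempty) (hU : U.Nonempty)
    (h0U : (0 : EuclideanSpace ℝ (Fin n)) ∈
      interior (convexHull ℝ (U : Set (EuclideanSpace ℝ (Fin n))))) :
    ((0 : EuclideanSpace ℝ (Fin n)) ∈
        convexHull ℝ (F : Set (EuclideanSpace ℝ (Fin n))) →
      sSup {c : ℝ | 0 < c ∧ c < 1 ∧
        (((-(c / (1 - c))) • convexHull ℝ (F : Set (EuclideanSpace ℝ (Fin n)))) ∩
          convexHull ℝ (U : Set (EuclideanSpace ℝ (Fin n)))).Nonempty} = 1) ∧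
    ((0 : EuclideanSpace ℝ (Fin n)) ∉
        convexHull ℝ (F : Set (EuclideanSpace ℝ (Fin n))) →
      sSup {c : ℝ | 0 < c ∧ c < 1 ∧
        (((-(c / (1 - c))) • convexHull ℝ (F : Set (EuclideanSpace ℝ (Fin n)))) ∩
          convexHull ℝ (U : Set (EuclideanSpace ℝ (Fin n)))).Nonempty} =
      (1 - sInf {r : ℝ | ∃ ν : EuclideanSpace ℝ (Fin n), ‖ν‖ = 1 ∧
        r = (F.sup' hF fun a => ⟪a, ν⟫) / (U.sup' hU fun a => ⟪a, ν⟫)})⁻¹) := by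
  constructor
  · intro h0
    refine Eq.trans (congrArg sSup ?_) (csSup_Ioo (zero_lt_one (α := ℝ)))
    ext c
    simp only [Set.mem_setOf_eq, Set.mem_Ioo]
    refine ⟨fun h => ⟨h.1, h.2.1⟩, fun h => ⟨h.1, h.2, 0, ⟨0, h0, by simp⟩, interior_subset h0U⟩⟩
  · intro h0
    obtain ⟨ε, hε, hball⟩ := Metric.mem_nhds_iff.mp (mem_interior_iff_mem_nhds.mp h0U)
    have hUlow : ∀ ν : EuclideanSpace ℝ (Fin n), ‖ν‖ = 1 →
        ε / 2 ≤ U.sup' hU fun a => ⟪a, ν⟫ := by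
      intro ν hν
      have := le_supp U hU ν ((ε / 2) • ν) (hball (by
        rw [mem_ball_zero_iff, norm_smul, hν, Real.norm_of_nonneg (by positivity)]; linarith))
      rwa [real_inner_smul_left, real_inner_self_eq_norm_sq, hν, one_pow, mul_one] at this
    have hUpos : ∀ ν : EuclideanSpace ℝ (Fin n), ‖ν‖ = 1 →
        0 < U.sup' hU fun a => ⟪a, ν⟫ := fun ν hν => by linarith [hUlow ν hν]
    set S := {r : ℝ | ∃ ν : EuclideanSpace ℝ (Fin n), ‖ν‖ = 1 ∧
        r = (F.sup' hF fun a => ⟪a, ν⟫) / (U.sup' hU fun a => ⟪a, ν⟫)} with hS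
    obtain ⟨a₀, ha₀⟩ := id hF
    have hbdd : BddBelow S := by
      refine ⟨-(‖a₀‖ / (ε / 2)), ?_⟩
      rintro r ⟨ν, hν, rfl⟩
      have hp := hUpos ν hν
      have h1 : -‖a₀‖ ≤ F.sup' hF fun a => ⟪a, ν⟫ := by
        refine le_trans ?_ (Finset.le_sup' (fun a => ⟪a, ν⟫) ha₀)
        have := (abs_le.mp (abs_real_inner_le_norm a₀ ν)).1
        rwa [hν, mul_one] at this
      rw [le_div_iff₀ hp]
      have h2 : ‖a₀‖ ≤ ‖a₀‖ / (ε / 2) * U.sup' hU fun a => ⟪a, ν⟫ := by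
        calc ‖a₀‖ = ‖a₀‖ / (ε / 2) * (ε / 2) := by field_simp
          _ ≤ _ := mul_le_mul_of_nonneg_left (hUlow ν hν) (by positivity)
      linarith
    obtain ⟨ν₀, u, hν₀, h1, h2⟩ := sep_unit (convex_convexHull ℝ _)
      (F.finite_toSet.isCompact_convexHull (𝕜 := ℝ)) (convex_singleton (𝕜 := ℝ) (0 : EuclideanSpace ℝ (Fin n)))
      isCompact_singleton ⟨a₀, subset_convexHull ℝ _ ha₀⟩ (Set.singleton_nonempty _)
      (Set.disjoint_singleton_right.mpr h0)
    have hm : sInf S < 0 := by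
      refine lt_of_le_of_lt (csInf_le hbdd ⟨ν₀, hν₀, rfl⟩) (div_neg_of_neg_of_pos ?_ (hUpos _ hν₀))
      rw [Finset.sup'_lt_iff]
      intro a ha
      have := h1 a (subset_convexHull ℝ _ ha)
      have h3 := h2 0 rfl
      rw [inner_zero_left] at h3
      linarith
    have hpos : (0 : ℝ) < (1 - sInf S)⁻¹ := inv_pos.mpr (by linarith)
    have hlt : (1 - sInf S)⁻¹ < 1 := inv_lt_one_of_one_lt₀ (by linarith)
    refine Eq.trans (congrArg sSup ?_) (csSup_Ioc hpos)
    ext c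
    simp only [Set.mem_setOf_eq, Set.mem_Ioc]
    have key : ∀ c : ℝ, 0 < c → c < 1 →
        ((((-(c / (1 - c))) • convexHull ℝ (F : Set (EuclideanSpace ℝ (Fin n)))) ∩
          convexHull ℝ (U : Set (EuclideanSpace ℝ (Fin n)))).Nonempty ↔ c ≤ (1 - sInf S)⁻¹) := by
      intro c hc hc1
      have hd : 0 < 1 - c := by linarith
      rw [meets_iff F U hF hU _ (div_pos hc hd), le_inv_comm₀ hc (by linarith), sub_le_comm,
        le_csInf_iff hbdd ⟨_, ν₀, hν₀, rfl⟩]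
      have aux : ∀ ν : EuclideanSpace ℝ (Fin n), ‖ν‖ = 1 →
          (0 ≤ c / (1 - c) * (F.sup' hF fun a => ⟪a, ν⟫) + (U.sup' hU fun a => ⟪a, ν⟫) ↔
          1 - c⁻¹ ≤ (F.sup' hF fun a => ⟪a, ν⟫) / (U.sup' hU fun a => ⟪a, ν⟫)) := by
        intro ν hν
        have hp := hUpos ν hν
        rw [le_div_iff₀ hp]
        generalize (F.sup' hF fun a => ⟪a, ν⟫) = x
        generalize (U.sup' hU fun a => ⟪a, ν⟫) = y
        have e : c / (1 - c) * x + y = c / (1 - c) * (x - (1 - c⁻¹) * y) := by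
          field_simp
          ring
        rw [e, mul_nonneg_iff_of_pos_left (div_pos hc hd), sub_nonneg]
      constructor
      · rintro h r ⟨ν, hν, rfl⟩
        exact (aux ν hν).mp (h ν hν)
      · intro h ν hν
        exact (aux ν hν).mpr (h _ ⟨ν, hν, rfl⟩)
    constructor
    · rintro ⟨hc, hc1, h⟩
      exact ⟨hc, (key c hc hc1).mp h⟩
    · rintro ⟨hc, h⟩
      have hc1 := h.trans_lt hlt
      exact ⟨hc, hc1, (key c hc hc1).mpr h⟩
end

section
/- Let F, U ⊂ ℝⁿ be nonempty finite sets with 0 in the interior of conv U, and set c(F,U) := sup{c ∈ (0,1) : 0 ∈ (1−c)·conv U + c·conv F}. For c ∈ (0,1) define g_c := c·h_F + (1−c)·h_U. Then: if 0 < c < c(F,U), then g_c(ν) > 0 for every unit vector ν; and if c(F,U) < c < 1, then there exists a unit vector ν with g_c(ν) < 0. -/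
open scoped RealInnerProductSpace Pointwise

lemma inner_le_sup_of_mem_hull {n : ℕ} (A : Finset (EuclideanSpace ℝ (Fin n))) (hA : A.Nonempty)
    (ν x : EuclideanSpace ℝ (Fin n))
    (hx : x ∈ convexHull ℝ (A : Set (EuclideanSpace ℝ (Fin n)))) :
    ⟪x, ν⟫ ≤ A.sup' hA fun a => ⟪a, ν⟫ := by
  have hc : Convex ℝ {y : EuclideanSpace ℝ (Fin n) | ⟪y, ν⟫ ≤ A.sup' hA fun a => ⟪a, ν⟫} := by
    apply convex_halfSpace_le
    exact ⟨fun x y => inner_add_left x y ν, fun c x => by simp [inner_smul_left]⟩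
  exact convexHull_min (fun a ha => Finset.le_sup' (fun a => ⟪a, ν⟫) (Finset.mem_coe.1 ha)) hc hx

/-- Corollary 6.5 of the paper. Let
`c(F,U) = sup {c ∈ (0,1) : 0 ∈ (1−c)·conv U + c·conv F}` and
`g_c = c·h_F + (1−c)·h_U`. If `0 < c < c(F,U)` then `g_c > 0` on the unit sphere;
if `c(F,U) < c < 1` then `g_c < 0` somewhere on the unit sphere. -/
theorem sign_of_combined_support_function
    (n : ℕ) (hn : 0 < n)
    (F U : Finset (EuclideanSpace ℝ (Fin n))) (hF : F.Nonempty) (hU : U.Nonempty)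
    (h0U : (0 : EuclideanSpace ℝ (Fin n)) ∈
      interior (convexHull ℝ (U : Set (EuclideanSpace ℝ (Fin n)))))
    (cFU : ℝ)
    (hcFU : cFU = sSup {c : ℝ | 0 < c ∧ c < 1 ∧
      (0 : EuclideanSpace ℝ (Fin n)) ∈
        (1 - c) • convexHull ℝ (U : Set (EuclideanSpace ℝ (Fin n))) +
          c • convexHull ℝ (F : Set (EuclideanSpace ℝ (Fin n)))}) :
    (∀ c : ℝ, 0 < c → c < cFU → ∀ ν : EuclideanSpace ℝ (Fin n), ‖ν‖ = 1 →
      0 < c * (F.sup' hF fun a => ⟪a, ν⟫) + (1 - c) * (U.sup' hU fun a => ⟪a, ν⟫)) ∧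
    (∀ c : ℝ, cFU < c → c < 1 → ∃ ν : EuclideanSpace ℝ (Fin n), ‖ν‖ = 1 ∧
      c * (F.sup' hF fun a => ⟪a, ν⟫) + (1 - c) * (U.sup' hU fun a => ⟪a, ν⟫) < 0) := by
  have hbdd : BddAbove {c : ℝ | 0 < c ∧ c < 1 ∧
      (0 : EuclideanSpace ℝ (Fin n)) ∈
        (1 - c) • convexHull ℝ (U : Set (EuclideanSpace ℝ (Fin n))) +
          c • convexHull ℝ (F : Set (EuclideanSpace ℝ (Fin n)))} :=
    ⟨1, fun c hc => hc.2.1.le⟩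
  have hnn : 0 ≤ cFU := by
    rw [hcFU]
    exact Real.sSup_nonneg fun c hc => hc.1.le
  constructor
  · intro c hc0 hc ν hν
    have hUpos : 0 < U.sup' hU fun a => ⟪a, ν⟫ := by
      obtain ⟨r, hr, hball⟩ := Metric.mem_nhds_iff.1 (mem_interior_iff_mem_nhds.1 h0U)
      have hm : (r / 2) • ν ∈ convexHull ℝ (U : Set (EuclideanSpace ℝ (Fin n))) := by
        apply hball
        rw [mem_ball_zero_iff, norm_smul, hν, Real.norm_of_nonneg (by positivity)]
        linarith
      have := inner_le_sup_of_mem_hull U hU ν _ hm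
      rw [real_inner_smul_left, real_inner_self_eq_norm_sq, hν] at this
      linarith
    have hne : {c : ℝ | 0 < c ∧ c < 1 ∧
      (0 : EuclideanSpace ℝ (Fin n)) ∈
        (1 - c) • convexHull ℝ (U : Set (EuclideanSpace ℝ (Fin n))) +
          c • convexHull ℝ (F : Set (EuclideanSpace ℝ (Fin n)))}.Nonempty := by
      by_contra h
      rw [Set.not_nonempty_iff_eq_empty] at h
      rw [h, Real.sSup_empty] at hcFU
      linarith
    rw [hcFU] at hc
    obtain ⟨d, ⟨hd0, hd1, hd⟩, hcd⟩ := exists_lt_of_lt_csSup hne hc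
    obtain ⟨_, ⟨u, hu, rfl⟩, _, ⟨f, hf, rfl⟩, huf⟩ := hd
    have h1 := inner_le_sup_of_mem_hull U hU ν _ hu
    have h2 := inner_le_sup_of_mem_hull F hF ν _ hf
    have h3 : (1 - d) * ⟪u, ν⟫ + d * ⟪f, ν⟫ = 0 := by
      have := congrArg (fun x => ⟪x, ν⟫) huf
      simpa [inner_add_left, real_inner_smul_left] using this
    set a := F.sup' hF fun a => ⟪a, ν⟫
    set b := U.sup' hU fun a => ⟪a, ν⟫
    have h4 : 0 ≤ (1 - d) * b + d * a := by
      have := mul_le_mul_of_nonneg_left h1 (by linarith : (0 : ℝ) ≤ 1 - d)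
      have := mul_le_mul_of_nonneg_left h2 hd0.le
      linarith
    have h5 : 0 < d * (c * a + (1 - c) * b) := by
      have := mul_nonneg hc0.le h4
      have := mul_pos (sub_pos.2 hcd) hUpos
      linarith
    exact pos_of_mul_pos_right h5 hd0.le
  · intro c hc hc1
    have hc0 : 0 < c := lt_of_le_of_lt hnn hc
    set K := (1 - c) • convexHull ℝ (U : Set (EuclideanSpace ℝ (Fin n))) +
          c • convexHull ℝ (F : Set (EuclideanSpace ℝ (Fin n))) with hK
    have h0 : (0 : EuclideanSpace ℝ (Fin n)) ∉ K := by
      intro h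
      have := le_csSup hbdd ⟨hc0, hc1, h⟩
      linarith
    have hconv : Convex ℝ K := ((convex_convexHull ℝ _).smul _).add ((convex_convexHull ℝ _).smul _)
    have hcl : IsClosed K :=
      (((U.finite_toSet.isCompact_convexHull (𝕜 := ℝ)).smul _).add
        ((F.finite_toSet.isCompact_convexHull (𝕜 := ℝ)).smul _)).isClosed
    obtain ⟨φ, u, hu0, hu⟩ := geometric_hahn_banach_point_closed hconv hcl h0
    rw [map_zero] at hu0
    set w := (InnerProductSpace.toDual ℝ (EuclideanSpace ℝ (Fin n))).symm φ with hw
    have hφ : ∀ x, φ x = ⟪x, w⟫ := fun x => by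
      rw [real_inner_comm, hw, InnerProductSpace.toDual_symm_apply]
    have hmem : ∀ a ∈ F, ∀ b ∈ U, 0 < c * ⟪a, w⟫ + (1 - c) * ⟪b, w⟫ := by
      intro a ha b hb
      have := hu ((1 - c) • b + c • a) (Set.add_mem_add
        (Set.smul_mem_smul_set (subset_convexHull ℝ _ (Finset.mem_coe.2 hb)))
        (Set.smul_mem_smul_set (subset_convexHull ℝ _ (Finset.mem_coe.2 ha))))
      rw [hφ, inner_add_left, real_inner_smul_left, real_inner_smul_left] at this
      linarith
    have hw0 : w ≠ 0 := by
      intro h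
      obtain ⟨a, ha⟩ := hF
      obtain ⟨b, hb⟩ := hU
      have := hmem a ha b hb
      simp [h] at this
    have hwn : 0 < ‖w‖ := norm_pos_iff.2 hw0
    refine ⟨(-‖w‖⁻¹) • w, ?_, ?_⟩
    · rw [norm_smul, norm_neg, norm_inv, norm_norm, inv_mul_cancel₀ hwn.ne']
    · obtain ⟨a, ha, hae⟩ := Finset.exists_mem_eq_sup' hF fun a => ⟪a, (-‖w‖⁻¹) • w⟫
      obtain ⟨b, hb, hbe⟩ := Finset.exists_mem_eq_sup' hU fun a => ⟪a, (-‖w‖⁻¹) • w⟫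
      rw [hae, hbe, real_inner_smul_right, real_inner_smul_right]
      have := mul_pos (inv_pos.2 hwn) (hmem a ha b hb)
      linarith
end

section
/- Let F, U ⊂ ℝⁿ be nonempty finite sets with 0 in the interior of conv U, and let k ≥ 1 be a natural number. Define c_k(F,U) := sup{c ∈ (0,1) : the function x ↦ (∑_{u∈F} e^{k⟨u,x⟩})^{−c/k} · (∑_{u∈U} e^{k⟨u,x⟩})^{−(1−c)/k} is Lebesgue-integrable on ℝⁿ}. Then c_k(F,U) = sup{c ∈ (0,1) : 0 ∈ (1−c)·conv U + c·conv F} = sup{c ∈ (0,1) : (−(c/(1−c))·conv F) ∩ conv U ≠ ∅} > 0. In particular, c_k(F,U) is independent of k. -/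
open scoped RealInnerProductSpace Pointwise

section Helpers

open MeasureTheory

lemma aux_exp_integrable (n : ℕ) (δ : ℝ) (hδ : 0 < δ) :
    Integrable (fun x : EuclideanSpace ℝ (Fin n) => Real.exp (-(δ * ‖x‖))) := by
  have h1 : Integrable (fun x : EuclideanSpace ℝ (Fin n) => (1 + ‖x‖) ^ (-((n + 1 : ℕ) : ℝ))) := by
    apply integrable_one_add_norm
    simp
  refine (h1.const_mul (((n + 1).factorial : ℝ) * Real.exp δ / δ ^ (n + 1))).mono' ?_ ?_
  · exact Continuous.aestronglyMeasurable (by fun_prop)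
  · refine Filter.Eventually.of_forall fun x => ?_
    have hx : 0 ≤ ‖x‖ := norm_nonneg x
    have h2 := Real.pow_div_factorial_le_exp (x := δ * (1 + ‖x‖)) (by positivity) (n + 1)
    rw [Real.norm_of_nonneg (Real.exp_nonneg _), Real.rpow_neg (by positivity), Real.rpow_natCast]
    have h3 : Real.exp (δ * (1 + ‖x‖)) = Real.exp δ * Real.exp (δ * ‖x‖) := by
      rw [← Real.exp_add]; ring_nf
    rw [h3, mul_pow] at h2
    rw [Real.exp_neg, ← div_eq_mul_inv, div_div, inv_eq_one_div, div_le_div_iff₀ (by positivity) (by positivity)]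
    rw [div_le_iff₀ (by positivity)] at h2
    linarith

/-- Lower bound for the exponential sum by any point of the convex hull. -/
lemma aux_sum_ge {n : ℕ} (A : Finset (EuclideanSpace ℝ (Fin n))) (k : ℕ)
    (p x : EuclideanSpace ℝ (Fin n))
    (hp : p ∈ convexHull ℝ (A : Set (EuclideanSpace ℝ (Fin n)))) :
    Real.exp ((k : ℝ) * ⟪p, x⟫) ≤ ∑ u ∈ A, Real.exp ((k : ℝ) * ⟪u, x⟫) := by
  have hc : ConvexOn ℝ Set.univ (fun u : EuclideanSpace ℝ (Fin n) => ⟪u, x⟫) := by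
    refine ⟨convex_univ, fun u _ v _ a b _ _ _ => ?_⟩
    simp [inner_add_left, inner_smul_left]
  obtain ⟨u, hu, hle⟩ := hc.exists_ge_of_mem_convexHull (Set.subset_univ _) hp
  calc Real.exp ((k : ℝ) * ⟪p, x⟫) ≤ Real.exp ((k : ℝ) * ⟪u, x⟫) := by
        apply Real.exp_le_exp.2
        exact mul_le_mul_of_nonneg_left hle (Nat.cast_nonneg k)
    _ ≤ _ := Finset.single_le_sum (f := fun u => Real.exp ((k : ℝ) * ⟪u, x⟫))
        (fun i _ => Real.exp_nonneg _) hu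

lemma aux_rpow_le {n : ℕ} (A : Finset (EuclideanSpace ℝ (Fin n))) (k : ℕ) (hk : 0 < k)
    (p x : EuclideanSpace ℝ (Fin n))
    (hp : p ∈ convexHull ℝ (A : Set (EuclideanSpace ℝ (Fin n)))) (c : ℝ) (hc : 0 < c) :
    (∑ u ∈ A, Real.exp ((k : ℝ) * ⟪u, x⟫)) ^ (-(c / (k : ℝ))) ≤ Real.exp (-(c * ⟪p, x⟫)) := by
  have hk' : (0 : ℝ) < k := Nat.cast_pos.2 hk
  have h := Real.rpow_le_rpow_of_nonpos (Real.exp_pos _) (aux_sum_ge A k p x hp)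
    (show -(c / (k : ℝ)) ≤ 0 by have := div_pos hc hk'; linarith)
  refine h.trans_eq ?_
  rw [← Real.exp_mul]
  congr 1
  field_simp

lemma aux_rpow_ge {n : ℕ} (A : Finset (EuclideanSpace ℝ (Fin n))) (hA : A.Nonempty)
    (k : ℕ) (hk : 0 < k) (x : EuclideanSpace ℝ (Fin n)) (c : ℝ) (hc : 0 < c) :
    ∃ p ∈ A, (A.card : ℝ) ^ (-(c / (k : ℝ))) * Real.exp (-(c * ⟪p, x⟫)) ≤
      (∑ u ∈ A, Real.exp ((k : ℝ) * ⟪u, x⟫)) ^ (-(c / (k : ℝ))) := by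
  have hk' : (0 : ℝ) < k := Nat.cast_pos.2 hk
  obtain ⟨p, hp, hmax⟩ := A.exists_max_image (fun u => ⟪u, x⟫) hA
  refine ⟨p, hp, ?_⟩
  have hs : ∑ u ∈ A, Real.exp ((k : ℝ) * ⟪u, x⟫) ≤ (A.card : ℝ) * Real.exp ((k : ℝ) * ⟪p, x⟫) := by
    rw [← nsmul_eq_mul]
    refine Finset.sum_le_card_nsmul _ _ _ fun u hu => ?_
    exact Real.exp_le_exp.2 (mul_le_mul_of_nonneg_left (hmax u hu) hk'.le)
  have hpos : 0 < ∑ u ∈ A, Real.exp ((k : ℝ) * ⟪u, x⟫) :=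
    Finset.sum_pos (fun _ _ => Real.exp_pos _) hA
  have h := Real.rpow_le_rpow_of_nonpos hpos hs
    (show -(c / (k : ℝ)) ≤ 0 by have := div_pos hc hk'; linarith)
  refine le_trans (le_of_eq ?_) h
  rw [Real.mul_rpow (Nat.cast_nonneg _) (Real.exp_nonneg _), ← Real.exp_mul]
  congr 2
  field_simp

lemma aux_integrable_of_lt (n : ℕ) (F U : Finset (EuclideanSpace ℝ (Fin n)))
    (h0U : (0 : EuclideanSpace ℝ (Fin n)) ∈
      interior (convexHull ℝ (U : Set (EuclideanSpace ℝ (Fin n)))))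
    (hF : F.Nonempty) (hU : U.Nonempty)
    (k : ℕ) (hk : 0 < k) (c c' : ℝ) (hc1 : c < 1) (hc'0 : 0 < c') (hcc : c' < c)
    (h : (0 : EuclideanSpace ℝ (Fin n)) ∈
          (1 - c) • convexHull ℝ (U : Set (EuclideanSpace ℝ (Fin n))) +
            c • convexHull ℝ (F : Set (EuclideanSpace ℝ (Fin n)))) :
    Integrable (fun x : EuclideanSpace ℝ (Fin n) =>
          (∑ u ∈ F, Real.exp ((k : ℝ) * ⟪u, x⟫)) ^ (-(c' / (k : ℝ))) *
          (∑ u ∈ U, Real.exp ((k : ℝ) * ⟪u, x⟫)) ^ (-((1 - c') / (k : ℝ)))) := by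
  obtain ⟨_, ⟨u0, hu0, rfl⟩, _, ⟨w0, hw0, rfl⟩, hsum⟩ := h
  obtain ⟨r, hr, hball⟩ := Metric.nhds_basis_closedBall.mem_iff.1 (mem_interior_iff_mem_nhds.1 h0U)
  have hc0 : 0 < c := hc'0.trans hcc
  have ht : 0 < 1 - c' / c := by
    rw [sub_pos, div_lt_one hc0]; exact hcc
  have h1c' : 0 < 1 - c' := by linarith
  have hposF : ∀ x, (∑ u ∈ F, Real.exp ((k : ℝ) * ⟪u, x⟫)) ≠ 0 := fun x =>
    (Finset.sum_pos (fun _ _ => Real.exp_pos _) hF).ne'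
  have hposU : ∀ x, (∑ u ∈ U, Real.exp ((k : ℝ) * ⟪u, x⟫)) ≠ 0 := fun x =>
    (Finset.sum_pos (fun _ _ => Real.exp_pos _) hU).ne'
  refine (aux_exp_integrable n ((1 - c' / c) * r) (by positivity)).mono' ?_ ?_
  · refine Continuous.aestronglyMeasurable (Continuous.mul ?_ ?_)
    · exact Continuous.rpow_const (by fun_prop) fun x => Or.inl (hposF x)
    · exact Continuous.rpow_const (by fun_prop) fun x => Or.inl (hposU x)
  · refine Filter.Eventually.of_forall fun x => ?_
    rw [Real.norm_of_nonneg (by positivity)]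
    set q : EuclideanSpace ℝ (Fin n) := (r * ‖x‖⁻¹) • x with hq
    have hqU : q ∈ convexHull ℝ (U : Set (EuclideanSpace ℝ (Fin n))) := by
      apply hball
      rw [mem_closedBall_zero_iff, hq, norm_smul, norm_mul, norm_inv, norm_norm,
        Real.norm_of_nonneg hr.le, mul_assoc]
      exact mul_le_of_le_one_right hr.le (inv_mul_le_one)
    have hqx : ⟪q, x⟫ = r * ‖x‖ := by
      rw [hq, real_inner_smul_left, real_inner_self_eq_norm_sq]
      by_cases hx : ‖x‖ = 0
      · simp [hx]
      · field_simp
    set a : ℝ := (c' / c) * (1 - c) / (1 - c') with ha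
    set b : ℝ := (1 - c' / c) / (1 - c') with hb
    have hpU : a • u0 + b • q ∈ convexHull ℝ (U : Set (EuclideanSpace ℝ (Fin n))) := by
      refine convex_convexHull ℝ _ hu0 hqU ?_ ?_ ?_
      · have : 0 < 1 - c := by linarith
        positivity
      · positivity
      · rw [ha, hb]; field_simp; ring
    have h1 := aux_rpow_le F k hk w0 x hw0 c' hc'0
    have h2 := aux_rpow_le U k hk _ x hpU (1 - c') h1c'
    refine (mul_le_mul h1 h2 (by positivity) (Real.exp_nonneg _)).trans_eq ?_
    rw [← Real.exp_add]
    congr 1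
    have hs : (1 - c) * ⟪u0, x⟫ + c * ⟪w0, x⟫ = 0 := by
      have := congrArg (fun y => ⟪y, x⟫) hsum
      simpa [inner_add_left, real_inner_smul_left] using this
    rw [inner_add_left, real_inner_smul_left, real_inner_smul_left, hqx]
    have e1 : (1 - c') * a = (c' / c) * (1 - c) := by rw [ha]; field_simp
    have e2 : (1 - c') * b = 1 - c' / c := by rw [hb]; field_simp
    have e3 : c' = (c' / c) * c := by field_simp
    have e4 : c' * ⟪w0, x⟫ = (c' / c) * (c * ⟪w0, x⟫) := by rw [← mul_assoc, ← e3]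
    have e5 : (1 - c') * (a * ⟪u0, x⟫ + b * (r * ‖x‖)) =
        (c' / c) * ((1 - c) * ⟪u0, x⟫) + (1 - c' / c) * r * ‖x‖ := by
      rw [mul_add, ← mul_assoc, ← mul_assoc (1 - c') b, e1, e2]; ring
    rw [e4, e5]
    linear_combination (-(c' / c)) * hs

lemma aux_mem_of_integrable (n : ℕ) (F U : Finset (EuclideanSpace ℝ (Fin n)))
    (hF : F.Nonempty) (hU : U.Nonempty)
    (k : ℕ) (hk : 0 < k) (c : ℝ) (hc0 : 0 < c) (hc1 : c < 1)
    (h : Integrable (fun x : EuclideanSpace ℝ (Fin n) =>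
          (∑ u ∈ F, Real.exp ((k : ℝ) * ⟪u, x⟫)) ^ (-(c / (k : ℝ))) *
          (∑ u ∈ U, Real.exp ((k : ℝ) * ⟪u, x⟫)) ^ (-((1 - c) / (k : ℝ))))) :
    (0 : EuclideanSpace ℝ (Fin n)) ∈
          (1 - c) • convexHull ℝ (U : Set (EuclideanSpace ℝ (Fin n))) +
            c • convexHull ℝ (F : Set (EuclideanSpace ℝ (Fin n))) := by
  by_contra hnot
  have hconv : Convex ℝ ((1 - c) • convexHull ℝ (U : Set (EuclideanSpace ℝ (Fin n))) +
            c • convexHull ℝ (F : Set (EuclideanSpace ℝ (Fin n)))) :=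
    ((convex_convexHull ℝ _).smul _).add ((convex_convexHull ℝ _).smul _)
  have hcl : IsClosed ((1 - c) • convexHull ℝ (U : Set (EuclideanSpace ℝ (Fin n))) +
            c • convexHull ℝ (F : Set (EuclideanSpace ℝ (Fin n)))) :=
    (((U.finite_toSet.isCompact_convexHull ℝ).smul _).add
      ((F.finite_toSet.isCompact_convexHull ℝ).smul _)).isClosed
  obtain ⟨f, s, hs0, hs⟩ := geometric_hahn_banach_closed_point hconv hcl hnot
  rw [map_zero] at hs
  set v := (InnerProductSpace.toDual ℝ (EuclideanSpace ℝ (Fin n))).symm f with hv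
  have hfv : ∀ y, f y = ⟪y, v⟫ := fun y => by
    rw [real_inner_comm, hv, InnerProductSpace.toDual_symm_apply]
  set S : Set (EuclideanSpace ℝ (Fin n)) :=
    {x | ∀ u ∈ U, ∀ w ∈ F, (1 - c) * ⟪u, x⟫ + c * ⟪w, x⟫ < 0} with hS
  have hvS : v ∈ S := by
    intro u hu w hw
    have := hs0 ((1 - c) • u + c • w) (Set.add_mem_add
      (Set.smul_mem_smul_set (subset_convexHull ℝ _ hu))
      (Set.smul_mem_smul_set (subset_convexHull ℝ _ hw)))
    rw [hfv, inner_add_left, real_inner_smul_left, real_inner_smul_left] at this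
    linarith
  have hSo : IsOpen S := by
    have : S = ⋂ u ∈ U, ⋂ w ∈ F, {x | (1 - c) * ⟪u, x⟫ + c * ⟪w, x⟫ < 0} := by
      ext x; simp [hS]
    rw [this]
    refine isOpen_biInter_finset fun u _ => isOpen_biInter_finset fun w _ => ?_
    exact isOpen_lt (by fun_prop) continuous_const
  have hSpos : 0 < volume S := hSo.measure_pos volume ⟨v, hvS⟩
  have hn : n ≠ 0 := by
    rintro rfl
    obtain ⟨u, hu⟩ := hU
    obtain ⟨w, hw⟩ := hF
    have := hvS u hu w hw
    rw [Subsingleton.elim v 0] at this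
    simp at this
  have hpre : ((2 : ℝ)⁻¹ • ·) ⁻¹' S = S := by
    ext x
    simp only [hS, Set.mem_preimage, Set.mem_setOf_eq, real_inner_smul_right]
    refine forall₂_congr fun u _ => forall₂_congr fun w _ => ?_
    constructor <;> intro h <;> linarith
  have hmeas := Measure.addHaar_preimage_smul (volume : Measure (EuclideanSpace ℝ (Fin n)))
    (r := (2 : ℝ)⁻¹) (by norm_num) S
  rw [hpre] at hmeas
  -- finiteness of the measure of `S`
  set C : ℝ := (F.card : ℝ) ^ (-(c / (k : ℝ))) * (U.card : ℝ) ^ (-((1 - c) / (k : ℝ))) with hC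
  have hFc : (0 : ℝ) < F.card := Nat.cast_pos.2 hF.card_pos
  have hUc : (0 : ℝ) < U.card := Nat.cast_pos.2 hU.card_pos
  have hCpos : 0 < C := by positivity
  have hfin : volume S < ⊤ := by
    refine lt_of_le_of_lt (measure_mono ?_) (h.measure_ge_lt_top hCpos)
    intro x hx
    obtain ⟨w, hw, hw1⟩ := aux_rpow_ge F hF k hk x c hc0
    obtain ⟨u, hu, hu1⟩ := aux_rpow_ge U hU k hk x (1 - c) (by linarith)
    have h1 := mul_le_mul hw1 hu1 (by positivity) (by positivity)
    refine le_trans ?_ h1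
    have hlt := hx u hu w hw
    have h2 : 1 ≤ Real.exp (-(c * ⟪w, x⟫)) * Real.exp (-((1 - c) * ⟪u, x⟫)) := by
      rw [← Real.exp_add]
      exact Real.one_le_exp (by linarith)
    calc C ≤ C * (Real.exp (-(c * ⟪w, x⟫)) * Real.exp (-((1 - c) * ⟪u, x⟫))) :=
          le_mul_of_one_le_right hCpos.le h2
      _ = _ := by rw [hC]; ring
  have hreal := congrArg ENNReal.toReal hmeas
  have hpos' := ENNReal.toReal_pos hSpos.ne' hfin.ne
  rw [ENNReal.toReal_mul, ENNReal.toReal_ofReal (abs_nonneg _)] at hreal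
  have h1 : |((2 : ℝ)⁻¹ ^ Module.finrank ℝ (EuclideanSpace ℝ (Fin n)))⁻¹| = 2 ^ n := by
    rw [abs_of_pos (by positivity)]
    simp
  rw [h1] at hreal
  have h2 : (1 : ℝ) < 2 ^ n := one_lt_pow₀ (by norm_num) hn
  nlinarith

end Helpers

/-- Proposition 6.2 of the paper. The real singularity exponent
`c_k(F,U)`, defined via integrability over `ℝⁿ` of
`(∑_{u∈F} e^{k⟨u,x⟩})^{−c/k} (∑_{u∈U} e^{k⟨u,x⟩})^{−(1−c)/k}`, equals
`sup {c ∈ (0,1) : 0 ∈ (1−c)·conv U + c·conv F}`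
`= sup {c ∈ (0,1) : (−(c/(1−c))·conv F) ∩ conv U ≠ ∅} > 0`;
in particular it is independent of `k`. -/
theorem singularity_exponent_eq_convex_threshold
    (n : ℕ) (F U : Finset (EuclideanSpace ℝ (Fin n))) (hF : F.Nonempty) (hU : U.Nonempty)
    (h0U : (0 : EuclideanSpace ℝ (Fin n)) ∈
      interior (convexHull ℝ (U : Set (EuclideanSpace ℝ (Fin n)))))
    (k : ℕ) (hk : 0 < k) :
    sSup {c : ℝ | 0 < c ∧ c < 1 ∧
        MeasureTheory.Integrable (fun x : EuclideanSpace ℝ (Fin n) =>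
          (∑ u ∈ F, Real.exp ((k : ℝ) * ⟪u, x⟫)) ^ (-(c / (k : ℝ))) *
          (∑ u ∈ U, Real.exp ((k : ℝ) * ⟪u, x⟫)) ^ (-((1 - c) / (k : ℝ))))} =
      sSup {c : ℝ | 0 < c ∧ c < 1 ∧
        (0 : EuclideanSpace ℝ (Fin n)) ∈
          (1 - c) • convexHull ℝ (U : Set (EuclideanSpace ℝ (Fin n))) +
            c • convexHull ℝ (F : Set (EuclideanSpace ℝ (Fin n)))} ∧
    sSup {c : ℝ | 0 < c ∧ c < 1 ∧
        (0 : EuclideanSpace ℝ (Fin n)) ∈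
          (1 - c) • convexHull ℝ (U : Set (EuclideanSpace ℝ (Fin n))) +
            c • convexHull ℝ (F : Set (EuclideanSpace ℝ (Fin n)))} =
      sSup {c : ℝ | 0 < c ∧ c < 1 ∧
        (((-(c / (1 - c))) • convexHull ℝ (F : Set (EuclideanSpace ℝ (Fin n)))) ∩
          convexHull ℝ (U : Set (EuclideanSpace ℝ (Fin n)))).Nonempty} ∧
    0 < sSup {c : ℝ | 0 < c ∧ c < 1 ∧
        MeasureTheory.Integrable (fun x : EuclideanSpace ℝ (Fin n) =>
          (∑ u ∈ F, Real.exp ((k : ℝ) * ⟪u, x⟫)) ^ (-(c / (k : ℝ))) *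
          (∑ u ∈ U, Real.exp ((k : ℝ) * ⟪u, x⟫)) ^ (-((1 - c) / (k : ℝ))))} := by
  set I := {c : ℝ | 0 < c ∧ c < 1 ∧
        MeasureTheory.Integrable (fun x : EuclideanSpace ℝ (Fin n) =>
          (∑ u ∈ F, Real.exp ((k : ℝ) * ⟪u, x⟫)) ^ (-(c / (k : ℝ))) *
          (∑ u ∈ U, Real.exp ((k : ℝ) * ⟪u, x⟫)) ^ (-((1 - c) / (k : ℝ))))} with hI
  set P := {c : ℝ | 0 < c ∧ c < 1 ∧
        (0 : EuclideanSpace ℝ (Fin n)) ∈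
          (1 - c) • convexHull ℝ (U : Set (EuclideanSpace ℝ (Fin n))) +
            c • convexHull ℝ (F : Set (EuclideanSpace ℝ (Fin n)))} with hP
  have hIP : I ⊆ P := fun c hc =>
    ⟨hc.1, hc.2.1, aux_mem_of_integrable n F U hF hU k hk c hc.1 hc.2.1 hc.2.2⟩
  have hPI : ∀ c ∈ P, ∀ c', 0 < c' → c' < c → c' ∈ I := fun c hc c' h0 h1 =>
    ⟨h0, h1.trans hc.2.1,
      aux_integrable_of_lt n F U h0U hF hU k hk c c' hc.2.1 h0 h1 hc.2.2⟩
  have hbP : BddAbove P := ⟨1, fun c hc => hc.2.1.le⟩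
  have hbI : BddAbove I := hbP.mono hIP
  have hPne : P.Nonempty := by
    obtain ⟨w, hw⟩ := hF
    have hcont : ContinuousAt (fun c : ℝ => (-(c / (1 - c))) • w) 0 := by
      have hd : ContinuousAt (fun c : ℝ => c / (1 - c)) 0 :=
        ContinuousAt.div₀ (f := fun c : ℝ => c) (g := fun c : ℝ => 1 - c)
          (by fun_prop) (by fun_prop) (by norm_num)
      fun_prop
    have hmem : convexHull ℝ (U : Set (EuclideanSpace ℝ (Fin n))) ∈
        nhds ((fun c : ℝ => (-(c / (1 - c))) • w) 0) := by
      simpa using mem_interior_iff_mem_nhds.1 h0U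
    have hev := hcont.eventually hmem
    obtain ⟨ε, hε, hball⟩ := Metric.eventually_nhds_iff.1 hev
    have hm : 0 < min (ε / 2) (1 / 2) := by positivity
    have hm1 : min (ε / 2) (1 / 2) < 1 := (min_le_right _ _).trans_lt (by norm_num)
    have hmε : min (ε / 2) (1 / 2) < ε := (min_le_left _ _).trans_lt (by linarith)
    set c := min (ε / 2) (1 / 2) with hc
    refine ⟨c, hm, hm1, ?_⟩
    have hx := hball (y := c) (by rwa [Real.dist_0_eq_abs, abs_of_pos hm])
    refine ⟨_, Set.smul_mem_smul_set hx, _,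
      Set.smul_mem_smul_set (subset_convexHull ℝ _ (Finset.mem_coe.2 hw)), ?_⟩
    have h1 : 1 - c ≠ 0 := by linarith
    simp only [smul_smul, ← add_smul]
    have : (1 - c) * -(c / (1 - c)) + c = 0 := by field_simp; ring
    rw [this, zero_smul]
  obtain ⟨c0, hc0⟩ := hPne
  have hhalf : c0 / 2 ∈ I := hPI c0 hc0 _ (half_pos hc0.1) (half_lt_self hc0.1)
  refine ⟨le_antisymm (csSup_le_csSup hbP ⟨_, hhalf⟩ hIP) ?_, ?_,
    (half_pos hc0.1).trans_le (le_csSup hbI hhalf)⟩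
  · refine csSup_le ⟨c0, hc0⟩ fun c hc => ?_
    refine le_of_forall_lt fun a ha => ?_
    obtain ⟨c', h1, h2⟩ := exists_between (max_lt ha hc.1)
    exact ((le_max_left _ _).trans_lt h1).trans_le
      (le_csSup hbI (hPI c hc c' ((le_max_right _ _).trans_lt h1) h2))
  · congr 1
    ext c
    refine and_congr_right fun hc => and_congr_right fun hc1 => ?_
    have h1 : 1 - c ≠ 0 := by linarith
    constructor
    · rintro ⟨_, ⟨u, hu, rfl⟩, _, ⟨w, hw, rfl⟩, hsum⟩
      refine ⟨u, ⟨w, hw, ?_⟩, hu⟩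
      simp only at hsum ⊢
      have h2 : u = (1 - c)⁻¹ • ((1 - c) • u) := by rw [smul_smul, inv_mul_cancel₀ h1, one_smul]
      rw [h2, eq_neg_of_add_eq_zero_left hsum, smul_neg, smul_smul, neg_smul, div_eq_inv_mul]
    · rintro ⟨_, ⟨w, hw, rfl⟩, hu⟩
      refine ⟨_, Set.smul_mem_smul_set hu, _, Set.smul_mem_smul_set hw, ?_⟩
      simp only [smul_smul, ← add_smul]
      have : (1 - c) * -(c / (1 - c)) + c = 0 := by field_simp; ring
      rw [this, zero_smul]
end

section
/- Let v₁,…,v_d ∈ ℤⁿ and let P := {y ∈ ℝⁿ : ⟨y, v_i⟩ ≥ −1 for all i = 1,…,d}; assume P is compact. Let H be a finite group of linear automorphisms of ℝⁿ preserving ℤⁿ and with h(P) = P for all h ∈ H, let π_H := (1/|H|) ∑_{h∈H} h, and let P^H := {y ∈ P : h(y) = y for all h ∈ H}. Then sup{c ∈ (0,1) : (−c/(1−c))•P^H ⊆ P} = min_{u ∈ extreme points of P^H} 1/(max_i ⟨u, v_i⟩ + 1) = min_{u ∈ π_H(extreme points of P)} 1/(max_i ⟨u, v_i⟩ + 1).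 -/
open scoped RealInnerProductSpace Pointwise

/-- A point of `ℝⁿ` all of whose coordinates are integers, i.e. a point of `ℤⁿ`. -/
def IsLatticePt {n : ℕ} (x : EuclideanSpace ℝ (Fin n)) : Prop :=
  ∀ i, ∃ m : ℤ, x i = m

theorem tian_aux_sSup {A : ℝ} (h0 : 0 ≤ A) (h1 : A ≤ 1) :
    sSup {c : ℝ | 0 < c ∧ c < 1 ∧ c ≤ A} = A := by
  rcases h0.eq_or_lt with h | h
  · subst h
    have : {c : ℝ | 0 < c ∧ c < 1 ∧ c ≤ 0} = ∅ := by
      ext c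
      simp only [Set.mem_setOf_eq, Set.mem_empty_iff_false, iff_false]
      rintro ⟨a, _, b⟩
      linarith
    rw [this, Real.sSup_empty]
  · apply csSup_eq_of_forall_le_of_forall_lt_exists_gt
    · exact ⟨A / 2, by positivity, by linarith, by linarith⟩
    · rintro c ⟨_, _, hc⟩
      exact hc
    · intro w hw
      refine ⟨(max w 0 + A) / 2, ⟨?_, ?_, ?_⟩, ?_⟩
      · have := le_max_right w 0
        linarith
      · have := max_lt hw h
        linarith
      · have := max_lt hw h
        linarith
      · have := le_max_left w 0
        have := max_lt hw h
        linarith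

theorem tian_aux {n d : ℕ} (hne : (Finset.univ : Finset (Fin d)).Nonempty)
    (v : Fin d → EuclideanSpace ℝ (Fin n))
    (P PH S : Set (EuclideanSpace ℝ (Fin n)))
    (hP : P = {y | ∀ i, -1 ≤ ⟪y, v i⟫}) (hPc : IsCompact P)
    (hPHP : PH ⊆ P) (hSP : S ⊆ PH) (hSne : S.Nonempty)
    (hS : ∀ C : Set (EuclideanSpace ℝ (Fin n)), IsClosed C → Convex ℝ C → S ⊆ C → PH ⊆ C) :
    sSup {c : ℝ | 0 < c ∧ c < 1 ∧ (-(c / (1 - c))) • PH ⊆ P} =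
      sInf ((fun u => 1 / ((Finset.univ.sup' hne fun i => ⟪u, v i⟫) + 1)) '' S) := by
  set M : EuclideanSpace ℝ (Fin n) → ℝ := fun u => Finset.univ.sup' hne fun i => ⟪u, v i⟫ with hM
  have hMle : ∀ u (m : ℝ), M u ≤ m ↔ ∀ i, ⟪u, v i⟫ ≤ m := by
    intro u m
    simp [hM, Finset.sup'_le_iff]
  have hMnn : ∀ u ∈ P, 0 ≤ M u := by
    intro u hu
    by_contra hlt
    push Not at hlt
    have hneg : ∀ i, ⟪u, v i⟫ < 0 := fun i => lt_of_le_of_lt ((hMle u (M u)).1 le_rfl i) hlt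
    have hu0 : u ≠ 0 := by
      rintro rfl
      obtain ⟨i, _⟩ := hne
      simpa using hneg i
    obtain ⟨R, hR⟩ := hPc.isBounded.exists_norm_le
    have hpos : 0 < ‖u‖ := norm_pos_iff.2 hu0
    have hmem : (-((|R| + 1) / ‖u‖)) • u ∈ P := by
      rw [hP]
      intro i
      rw [real_inner_smul_left]
      have h1 : 0 ≤ (|R| + 1) / ‖u‖ := by positivity
      nlinarith [mul_nonneg h1 (neg_nonneg.2 (hneg i).le)]
    have h2 := hR _ hmem
    rw [norm_smul, norm_neg, Real.norm_of_nonneg (by positivity), div_mul_cancel₀ _ hpos.ne'] at h2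
    linarith [le_abs_self R]
  have hfnn : ∀ u ∈ S, 0 ≤ 1 / (M u + 1) := by
    intro u hu
    have := hMnn u (hPHP (hSP hu))
    positivity
  have hbdd : BddBelow ((fun u => 1 / (M u + 1)) '' S) :=
    ⟨0, by rintro _ ⟨u, hu, rfl⟩; exact hfnn u hu⟩
  have hA0 : 0 ≤ sInf ((fun u => 1 / (M u + 1)) '' S) :=
    Real.sInf_nonneg (by rintro _ ⟨u, hu, rfl⟩; exact hfnn u hu)
  have hA1 : sInf ((fun u => 1 / (M u + 1)) '' S) ≤ 1 := by
    obtain ⟨u, hu⟩ := hSne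
    refine (csInf_le hbdd ⟨u, hu, rfl⟩).trans ?_
    have := hMnn u (hPHP (hSP hu))
    show 1 / (M u + 1) ≤ 1
    rw [div_le_one (by linarith)]
    linarith
  rw [← tian_aux_sSup hA0 hA1]
  congr 1
  ext c
  simp only [Set.mem_setOf_eq]
  refine and_congr_right fun hc0 => and_congr_right fun hc1 => ?_
  have h1c : 0 < 1 - c := by linarith
  have key : ∀ u, (-(c / (1 - c))) • u ∈ P ↔ ∀ i, ⟪u, v i⟫ ≤ (1 - c) / c := by
    intro u
    rw [hP]
    simp only [Set.mem_setOf_eq]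
    refine forall_congr' fun i => ?_
    rw [real_inner_smul_left, le_div_iff₀ hc0, neg_mul, neg_le_neg_iff, div_mul_eq_mul_div,
      div_le_one h1c, mul_comm]
  rw [le_csInf_iff hbdd (hSne.image _)]
  have key2 : ∀ u ∈ S, (c ≤ 1 / (M u + 1) ↔ ∀ i, ⟪u, v i⟫ ≤ (1 - c) / c) := by
    intro u hu
    have := hMnn u (hPHP (hSP hu))
    rw [← hMle, le_div_iff₀ (by linarith), le_div_iff₀ hc0]
    constructor <;> intro h <;> nlinarith
  constructor
  · rintro h _ ⟨u, hu, rfl⟩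
    exact (key2 u hu).2 ((key u).1 (h (Set.smul_mem_smul_set (hSP hu))))
  · intro h
    have hsub : PH ⊆ {u | ∀ i, ⟪u, v i⟫ ≤ (1 - c) / c} := by
      apply hS
      · simp only [Set.setOf_forall]
        exact isClosed_iInter fun i => isClosed_le (by fun_prop) (by fun_prop)
      · simp only [Set.setOf_forall]
        refine convex_iInter fun i => ?_
        refine convex_halfSpace_le ⟨fun x y => inner_add_left _ _ _, fun a x => ?_⟩ _
        simp [real_inner_smul_left]
      · intro u hu
        exact (key2 u hu).1 (h _ ⟨u, hu, rfl⟩)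
    rintro _ ⟨u, hu, rfl⟩
    exact (key u).2 (hsub hu)

/-- the convex-geometric content of the paper's main Theorem 1.3 on
Tian's stabilization problem. For the compact polytope
`P = {y : ⟨y, vᵢ⟩ ≥ −1 ∀ i}` with `vᵢ ∈ ℤⁿ`, an `H`-action as indicated, the
averaging map `π_H` and the fixed-point set `P^H`:
`sup {c ∈ (0,1) : (−c/(1−c))•P^H ⊆ P}`
`= min_{u ∈ Ver P^H} 1/(maxᵢ ⟨u, vᵢ⟩ + 1) = min_{u ∈ π_H(Ver P)} 1/(maxᵢ ⟨u, vᵢ⟩ + 1)`. -/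
theorem tian_stabilization_convex
    (n d : ℕ) (hd : 0 < d) (v : Fin d → EuclideanSpace ℝ (Fin n))
    (hv : ∀ i, IsLatticePt (v i))
    (P : Set (EuclideanSpace ℝ (Fin n)))
    (hP : P = {y | ∀ i, -1 ≤ ⟪y, v i⟫}) (hPc : IsCompact P)
    (H : Subgroup (EuclideanSpace ℝ (Fin n) ≃ₗ[ℝ] EuclideanSpace ℝ (Fin n)))
    [Fintype H]
    (hlat : ∀ h ∈ H, ∀ x : EuclideanSpace ℝ (Fin n), IsLatticePt x → IsLatticePt (h x))
    (hinv : ∀ h ∈ H, h '' P = P)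
    (piH : EuclideanSpace ℝ (Fin n) → EuclideanSpace ℝ (Fin n))
    (hpiH : ∀ x, piH x = (Fintype.card H : ℝ)⁻¹ •
      ∑ h : H, (h : EuclideanSpace ℝ (Fin n) ≃ₗ[ℝ] EuclideanSpace ℝ (Fin n)) x)
    (PH : Set (EuclideanSpace ℝ (Fin n)))
    (hPH : PH = {y ∈ P | ∀ h ∈ H, h y = y}) :
    sSup {c : ℝ | 0 < c ∧ c < 1 ∧ (-(c / (1 - c))) • PH ⊆ P} =
      sInf ((fun u => 1 / ((Finset.univ.sup' (Finset.univ_nonempty_iff.mpr ⟨⟨0, hd⟩⟩)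
        fun i => ⟪u, v i⟫) + 1)) '' (PH.extremePoints ℝ)) ∧
    sInf ((fun u => 1 / ((Finset.univ.sup' (Finset.univ_nonempty_iff.mpr ⟨⟨0, hd⟩⟩)
        fun i => ⟪u, v i⟫) + 1)) '' (PH.extremePoints ℝ)) =
      sInf ((fun u => 1 / ((Finset.univ.sup' (Finset.univ_nonempty_iff.mpr ⟨⟨0, hd⟩⟩)
        fun i => ⟪u, v i⟫) + 1)) '' (piH '' (P.extremePoints ℝ))) := by
  have hclosed : IsClosed P := hPc.isClosed
  have hconv : Convex ℝ P := by
    rw [hP]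
    simp only [Set.setOf_forall]
    refine convex_iInter fun i => ?_
    refine convex_halfSpace_ge ⟨fun x y => inner_add_left _ _ _, fun a x => ?_⟩ _
    simp [real_inner_smul_left]
  have h0P : (0 : EuclideanSpace ℝ (Fin n)) ∈ P := by
    rw [hP]
    intro i
    simp
  have hPHP : PH ⊆ P := by
    rw [hPH]
    exact fun y hy => hy.1
  have h0PH : (0 : EuclideanSpace ℝ (Fin n)) ∈ PH := by
    rw [hPH]
    exact ⟨h0P, fun h _ => map_zero h⟩
  have hPHeq : PH = P ∩ ⋂ h : H, {y | (h : EuclideanSpace ℝ (Fin n) ≃ₗ[ℝ] EuclideanSpace ℝ (Fin n)) y = y} := by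
    rw [hPH]
    ext y
    simp
  have hPHc : IsCompact PH := by
    rw [hPHeq]
    refine hPc.inter_right (isClosed_iInter fun h => isClosed_eq ?_ continuous_id)
    exact LinearMap.continuous_of_finiteDimensional
      ((h : EuclideanSpace ℝ (Fin n) ≃ₗ[ℝ] EuclideanSpace ℝ (Fin n)).toLinearMap)
  have hPHconv : Convex ℝ PH := by
    rw [hPH]
    intro x hx y hy a b ha hb hab
    refine ⟨hconv hx.1 hy.1 ha hb hab, fun h hh => ?_⟩
    rw [map_add, map_smul, map_smul, hx.2 h hh, hy.2 h hh]
  obtain ⟨L, hL⟩ : ∃ L : EuclideanSpace ℝ (Fin n) →ₗ[ℝ] EuclideanSpace ℝ (Fin n),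
      ∀ x, L x = piH x := by
    refine ⟨(Fintype.card H : ℝ)⁻¹ • ∑ h : H,
      (h : EuclideanSpace ℝ (Fin n) ≃ₗ[ℝ] EuclideanSpace ℝ (Fin n)).toLinearMap, fun x => ?_⟩
    rw [hpiH]
    simp
  have hcard : (Fintype.card H : ℝ) ≠ 0 := by
    exact_mod_cast Fintype.card_ne_zero
  have hfix : ∀ x ∈ PH, piH x = x := by
    intro x hx
    rw [hPH] at hx
    rw [hpiH, Finset.sum_congr rfl fun (h : H) _ => hx.2 h h.2]
    rw [Finset.sum_const, Finset.card_univ, ← Nat.cast_smul_eq_nsmul ℝ, smul_smul,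
      inv_mul_cancel₀ hcard, one_smul]
  have hmap : ∀ x ∈ P, piH x ∈ PH := by
    intro x hx
    rw [hPH]
    constructor
    · rw [hpiH, Finset.smul_sum]
      refine hconv.sum_mem (fun _ _ => by positivity) ?_ fun h _ => ?_
      · rw [Finset.sum_const, Finset.card_univ, ← Nat.cast_smul_eq_nsmul ℝ, smul_eq_mul,
          mul_inv_cancel₀ hcard]
      · rw [← hinv h h.2]
        exact Set.mem_image_of_mem _ hx
    · intro g hg
      rw [hpiH, map_smul, map_sum]
      congr 1
      exact Fintype.sum_equiv (Equiv.mulLeft (⟨g, hg⟩ : H)) _ _ fun h => rfl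
  have e1 := tian_aux (Finset.univ_nonempty_iff.mpr ⟨⟨0, hd⟩⟩) v P PH (PH.extremePoints ℝ) hP hPc hPHP
    extremePoints_subset (hPHc.extremePoints_nonempty ⟨0, h0PH⟩) (by
      intro C hC hCc hsub
      rw [← closure_convexHull_extremePoints hPHc hPHconv]
      exact closure_minimal (convexHull_min hsub hCc) hC)
  have e2 := tian_aux (Finset.univ_nonempty_iff.mpr ⟨⟨0, hd⟩⟩) v P PH (piH '' (P.extremePoints ℝ)) hP hPc hPHP
    (by
      rintro _ ⟨x, hx, rfl⟩
      exact hmap x (extremePoints_subset hx))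
    ((hPc.extremePoints_nonempty ⟨0, h0P⟩).image _) (by
      intro C hC hCc hsub
      have hsub2 : P ⊆ L ⁻¹' C := by
        rw [← closure_convexHull_extremePoints hPc hconv]
        refine closure_minimal (convexHull_min ?_ (hCc.linear_preimage L))
          (hC.preimage L.continuous_of_finiteDimensional)
        intro x hx
        rw [Set.mem_preimage, hL]
        exact hsub ⟨x, hx, rfl⟩
      intro x hx
      have := hsub2 (hPHP hx)
      rwa [Set.mem_preimage, hL, hfix x hx] at this)
  exact ⟨e1, e1.symm.trans e2⟩
end

section
/- Let P ⊂ ℝⁿ be a compact convex set with 0 in its interior, and let F ⊂ ℝⁿ be a nonempty finite set. Then sup{c ∈ (0,1) : P ∩ ((−c/(1−c))•conv F) ≠ ∅} = 1/(1 + min_{x ∈ conv F} ‖x‖_{−P}). -/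
open scoped RealInnerProductSpace Pointwise

/-- Corollary 7.5 of the paper. For a compact convex `P` with
`0 ∈ int P` and a nonempty finite set `F`,
`sup {c ∈ (0,1) : P ∩ ((−c/(1−c))·conv F) ≠ ∅} = 1/(1 + min_{conv F} ‖·‖_{−P})`,
where `‖x‖_{−P} = inf {t ≥ 0 : x ∈ t•(−P)}` is the gauge of `−P`. -/
theorem sup_dilation_eq_inv_one_add_min_gauge
    (n : ℕ) (P : Set (EuclideanSpace ℝ (Fin n)))
    (hPc : IsCompact P) (hPconv : Convex ℝ P)
    (h0 : (0 : EuclideanSpace ℝ (Fin n)) ∈ interior P)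
    (F : Finset (EuclideanSpace ℝ (Fin n))) (hF : F.Nonempty) :
    sSup {c : ℝ | 0 < c ∧ c < 1 ∧
        (P ∩ ((-(c / (1 - c))) •
          convexHull ℝ (F : Set (EuclideanSpace ℝ (Fin n))))).Nonempty} =
      1 / (1 + sInf ((fun x => sInf {t : ℝ | 0 ≤ t ∧ x ∈ t • (-P)}) ''
        convexHull ℝ (F : Set (EuclideanSpace ℝ (Fin n))))) := by
  set C := convexHull ℝ (F : Set (EuclideanSpace ℝ (Fin n))) with hC
  set g : EuclideanSpace ℝ (Fin n) → ℝ := fun x => sInf {t : ℝ | 0 ≤ t ∧ x ∈ t • (-P)} with hg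
  have hCne : C.Nonempty := by
    obtain ⟨x, hx⟩ := hF
    exact ⟨x, subset_convexHull ℝ _ (by simpa using hx)⟩
  have hP0 : (0 : EuclideanSpace ℝ (Fin n)) ∈ P := interior_subset h0
  have hbdd : ∀ x, BddBelow {t : ℝ | 0 ≤ t ∧ x ∈ t • (-P)} := fun x => ⟨0, fun t ht => ht.1⟩
  have hne : ∀ x, {t : ℝ | 0 ≤ t ∧ x ∈ t • (-P)}.Nonempty := by
    intro x
    have hn : P ∈ nhds (0 : EuclideanSpace ℝ (Fin n)) := mem_interior_iff_mem_nhds.mp h0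
    obtain ⟨r, hr, hr'⟩ := (absorbent_nhds_zero (𝕜 := ℝ) hn (-x)).exists_pos
    have h1 := hr' r (by simp [abs_of_pos hr])
    obtain ⟨y, hy, hyx⟩ := h1 (Set.mem_singleton _)
    refine ⟨r, hr.le, -y, by simpa using hy, ?_⟩
    simp only at hyx ⊢
    rw [smul_neg, hyx, neg_neg]
  have hg0 : ∀ x, 0 ≤ g x := fun x => Real.sInf_nonneg (fun t ht => ht.1)
  have hgb : BddBelow (g '' C) := ⟨0, by rintro _ ⟨x, _, rfl⟩; exact hg0 x⟩
  have hm0 : 0 ≤ sInf (g '' C) := Real.sInf_nonneg (by rintro _ ⟨x, _, rfl⟩; exact hg0 x)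
  set m := sInf (g '' C) with hm
  have hpos : 0 < 1 / (1 + m) := by positivity
  have key : ∀ c : ℝ, 0 < c → c < 1 / (1 + m) → c ∈ {c : ℝ | 0 < c ∧ c < 1 ∧
      (P ∩ ((-(c / (1 - c))) • C)).Nonempty} := by
    intro c hc hcm
    have h1 : c * (1 + m) < 1 := by rwa [lt_div_iff₀ (by positivity)] at hcm
    have hc1 : c < 1 := by nlinarith
    have hs : m < (1 - c) / c := by
      rw [lt_div_iff₀ hc]; nlinarith
    obtain ⟨_, ⟨x, hx, rfl⟩, hxs⟩ := exists_lt_of_csInf_lt (hCne.image g) hs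
    obtain ⟨t, ⟨ht0, y, hy, hyx⟩, hts⟩ := exists_lt_of_csInf_lt (hne x) hxs
    simp only at hyx
    have h1c : 0 < 1 - c := by linarith
    refine ⟨hc, hc1, -(c / (1 - c)) • x, ?_, Set.smul_mem_smul_set hx⟩
    have : -(c / (1 - c)) • x = (c / (1 - c) * t) • (-y) := by
      rw [← hyx, smul_smul, smul_neg, ← neg_smul, neg_mul]
    rw [this]
    refine hPconv.smul_mem_of_zero_mem hP0 (by simpa using hy) ⟨by positivity, ?_⟩
    rw [lt_div_iff₀ hc] at hts
    rw [div_mul_eq_mul_div, div_le_one h1c]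
    linarith
  apply csSup_eq_of_forall_le_of_forall_lt_exists_gt
  · exact ⟨_, key _ (half_pos hpos) (half_lt_self hpos)⟩
  · rintro c ⟨hc, hc1, z, hzP, x, hx, hxz⟩
    simp only at hxz
    have h1c : 0 < 1 - c := by linarith
    have h1 : m ≤ g x := csInf_le hgb ⟨x, hx, rfl⟩
    have h2 : g x ≤ (1 - c) / c := by
      refine csInf_le (hbdd x) ⟨by positivity, -z, by simpa using hzP, ?_⟩
      simp only
      rw [← hxz, neg_smul, neg_neg, smul_smul]
      have : (1 - c) / c * (c / (1 - c)) = 1 := by field_simp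
      rw [this, one_smul]
    have h3 := h1.trans h2
    rw [le_div_iff₀ hc] at h3
    rw [le_div_iff₀ (by positivity)]
    linarith
  · intro w hw
    obtain ⟨c, h1, h2⟩ := exists_between (max_lt hw hpos)
    exact ⟨c, key c ((le_max_right _ _).trans_lt h1) h2, (le_max_left _ _).trans_lt h1⟩
end

section
/- Let P ⊂ ℝⁿ be the convex hull of a finite subset of ℤⁿ with 0 in its interior, and suppose that every point of P at which ‖·‖_{−P} attains its maximum over P is an extreme point of P (condition (∗_P)). Then for every k ≥ 1 and every m with 2 ≤ m ≤ |P ∩ (1/k)ℤⁿ|, one has max over subsets F ⊆ P ∩ (1/k)ℤⁿ with |F| = m of (min_{x ∈ conv F} ‖x‖_{−P}) < max_{x∈P} ‖x‖_{−P}. -/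
open scoped RealInnerProductSpace Pointwise

/-- The gauge (near-norm) `‖x‖₋P = inf {t ≥ 0 : x ∈ t•(−P)}` of the reflected body `−P`. -/
noncomputable def gaugeNeg {n : ℕ} (P : Set (EuclideanSpace ℝ (Fin n)))
    (x : EuclideanSpace ℝ (Fin n)) : ℝ :=
  sInf {t : ℝ | 0 ≤ t ∧ x ∈ t • (-P)}

/-- The rescaled lattice `(1/k)ℤⁿ = {u/k : u ∈ ℤⁿ}`. -/
def latticeDiv (n k : ℕ) : Set (EuclideanSpace ℝ (Fin n)) :=
  {x | ∀ i, ∃ z : ℤ, x i = (z : ℝ) / k}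

/-- `β(k,m)`: the maximum, over subsets `F ⊆ P ∩ (1/k)ℤⁿ` with `|F| = m`, of
`min_{x ∈ conv F} ‖x‖₋P`. -/
noncomputable def betaKM {n : ℕ} (P : Set (EuclideanSpace ℝ (Fin n))) (k m : ℕ) : ℝ :=
  sSup {r : ℝ | ∃ F : Finset (EuclideanSpace ℝ (Fin n)),
    (F : Set (EuclideanSpace ℝ (Fin n))) ⊆ P ∩ latticeDiv n k ∧ F.card = m ∧
    r = sInf (gaugeNeg P '' (convexHull ℝ (F : Set (EuclideanSpace ℝ (Fin n)))))}

/-- cf. Theorem 1.6 of the paper, case where (∗_P) holds. If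
`‖·‖₋P` attains its maximum over `P` only at extreme points of `P`, then for all
`k ≥ 1` and `2 ≤ m ≤ |P ∩ (1/k)ℤⁿ|`, one has `β(k,m) < max_P ‖·‖₋P`. -/
theorem betaKM_lt_max_of_starP
    (n : ℕ) (T : Finset (EuclideanSpace ℝ (Fin n))) (hT : ∀ x ∈ T, IsLatticePt x)
    (P : Set (EuclideanSpace ℝ (Fin n)))
    (hP : P = convexHull ℝ (T : Set (EuclideanSpace ℝ (Fin n))))
    (h0 : (0 : EuclideanSpace ℝ (Fin n)) ∈ interior P)
    (hstar : ∀ x ∈ P, (∀ y ∈ P, gaugeNeg P y ≤ gaugeNeg P x) → x ∈ P.extremePoints ℝ)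
    (k m : ℕ) (hk : 0 < k) (hm2 : 2 ≤ m)
    (hmcard : m ≤ (P ∩ latticeDiv n k).ncard) :
    betaKM P k m < sSup (gaugeNeg P '' P) := by
  classical
  have hconv : Convex ℝ P := hP ▸ convex_convexHull ℝ _
  have hbddP : Bornology.IsBounded P := by
    rw [hP, isBounded_convexHull]
    exact T.finite_toSet.isBounded
  -- the gauge is bounded below by zero, and bounded above on `P`
  have hlow : ∀ s : Set (EuclideanSpace ℝ (Fin n)), BddBelow (gaugeNeg P '' s) := by
    rintro s
    refine ⟨0, ?_⟩
    rintro _ ⟨x, _, rfl⟩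
    exact Real.sInf_nonneg fun t ht => ht.1
  have hup : BddAbove (gaugeNeg P '' P) := by
    obtain ⟨R, hR⟩ := hbddP.exists_norm_le
    obtain ⟨e, he, hball⟩ := Metric.mem_nhds_iff.1 (mem_interior_iff_mem_nhds.1 h0)
    have hRpos : 0 ≤ R := (norm_nonneg _).trans (hR 0 (interior_subset h0))
    have hcpos : 0 < (R + 1) / e := by positivity
    refine ⟨(R + 1) / e, ?_⟩
    rintro _ ⟨x, hx, rfl⟩
    refine csInf_le ⟨0, fun t ht => ht.1⟩ ⟨hcpos.le, ?_⟩
    rw [Set.mem_smul_set_iff_inv_smul_mem₀ hcpos.ne', Set.mem_neg]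
    apply hball
    rw [mem_ball_zero_iff, norm_neg, norm_smul, norm_inv, Real.norm_of_nonneg hcpos.le,
      inv_mul_lt_iff₀ hcpos, div_mul_cancel₀ _ he.ne']
    linarith [hR x hx]
  have hfin : (P ∩ latticeDiv n k).Finite := Set.finite_of_ncard_pos (by omega)
  set S := {r : ℝ | ∃ F : Finset (EuclideanSpace ℝ (Fin n)),
    (F : Set (EuclideanSpace ℝ (Fin n))) ⊆ P ∩ latticeDiv n k ∧ F.card = m ∧
    r = sInf (gaugeNeg P '' (convexHull ℝ (F : Set (EuclideanSpace ℝ (Fin n)))))} with hS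
  have hSfin : S.Finite := by
    refine (hfin.toFinset.powerset.finite_toSet.image fun F : Finset (EuclideanSpace ℝ (Fin n)) =>
      sInf (gaugeNeg P '' (convexHull ℝ (F : Set (EuclideanSpace ℝ (Fin n)))))).subset ?_
    rintro r ⟨F, hF, _, rfl⟩
    refine ⟨F, ?_, rfl⟩
    simp only [Finset.coe_powerset, Set.mem_preimage, Set.mem_powerset_iff, Set.Finite.coe_toFinset]
    exact hF
  have hSne : S.Nonempty := by
    rw [Set.ncard_eq_toFinset_card _ hfin] at hmcard
    obtain ⟨F, hF, hc⟩ := Finset.exists_subset_card_eq hmcard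
    refine ⟨_, F, ?_, hc, rfl⟩
    intro x hx
    exact hfin.mem_toFinset.1 (hF hx)
  obtain ⟨F, hF, hc, hr⟩ := hSne.csSup_mem hSfin
  change sSup S < _
  rw [hr]
  obtain ⟨a, ha, b, hb, hab⟩ := Finset.one_lt_card.1 (show 1 < F.card by omega)
  have haP : a ∈ P := (hF ha).1
  have hbP : b ∈ P := (hF hb).1
  have hopen : midpoint ℝ a b ∈ openSegment ℝ a b := by
    rw [midpoint_eq_smul_add, smul_add]
    exact ⟨⅟2, ⅟2, by norm_num, by norm_num, by norm_num, rfl⟩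
  have hmF : midpoint ℝ a b ∈ convexHull ℝ (F : Set (EuclideanSpace ℝ (Fin n))) :=
    (convex_convexHull ℝ _).openSegment_subset (subset_convexHull ℝ _ ha)
      (subset_convexHull ℝ _ hb) hopen
  have hmP : midpoint ℝ a b ∈ P := hconv.openSegment_subset haP hbP hopen
  refine (csInf_le (hlow _) ⟨_, hmF, rfl⟩).trans_lt ?_
  by_contra hle
  push Not at hle
  have hext := hstar _ hmP fun y hy => (le_csSup hup ⟨y, hy, rfl⟩).trans hle
  have h := mem_extremePoints.1 hext |>.2 a haP b hbP hopen
  exact hab (h.1.trans h.2.symm)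
end

section
/- Let P ⊂ ℝⁿ be the convex hull of a finite subset of ℤⁿ with 0 in its interior, and suppose there exists a point x̂ ∈ P that is not an extreme point of P and at which ‖·‖_{−P} attains its maximum over P (i.e., condition (∗_P) fails). Then for every m ≥ 1 there exists k₀ such that for all k ≥ k₀ one has |P ∩ (1/k)ℤⁿ| ≥ m and max over subsets F ⊆ P ∩ (1/k)ℤⁿ with |F| = m of (min_{x ∈ conv F} ‖x‖_{−P}) = max_{x∈P} ‖x‖_{−P}. -/
open scoped RealInnerProductSpace Pointwise

lemma gaugeNeg_eq_gauge {n : ℕ} (P : Set (EuclideanSpace ℝ (Fin n)))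
    (h0 : (0 : EuclideanSpace ℝ (Fin n)) ∈ P) (x : EuclideanSpace ℝ (Fin n)) :
    gaugeNeg P x = gauge (-P) x := by
  have hne : (-P).Nonempty := ⟨0, by simpa using h0⟩
  by_cases hx : x = 0
  · subst hx
    rw [gauge_zero]
    unfold gaugeNeg
    apply le_antisymm
    · exact csInf_le ⟨0, fun t ht => ht.1⟩ ⟨le_rfl, by rw [Set.zero_smul_set hne]; simp⟩
    · exact Real.sInf_nonneg fun t ht => ht.1
  · unfold gaugeNeg gauge
    congr 1
    ext t
    constructor
    · rintro ⟨h, h'⟩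
      refine ⟨lt_of_le_of_ne h ?_, h'⟩
      rintro rfl
      rw [Set.zero_smul_set hne] at h'
      exact hx (by simpa using h')
    · rintro ⟨h, h'⟩
      exact ⟨h.le, h'⟩

lemma finite_lattice {n : ℕ} (P : Set (EuclideanSpace ℝ (Fin n))) (hb : Bornology.IsBounded P)
    (k : ℕ) (hk : 0 < k) : (P ∩ latticeDiv n k).Finite := by
  obtain ⟨R, hR⟩ := hb.exists_norm_le
  have hfin : (Set.univ.pi (fun _ : Fin n => Set.Icc (-⌈R * k⌉) ⌈R * k⌉)).Finite :=
    Set.Finite.pi' (fun _ => Set.finite_Icc _ _) |>.subset (by intro f hf i; exact hf i trivial)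
  refine (hfin.image (fun f : Fin n → ℤ => WithLp.toLp 2 (fun i => (f i : ℝ) / k))).subset ?_
  rintro x ⟨hxP, hxL⟩
  choose f hf using hxL
  have hk' : (0 : ℝ) < k := by exact_mod_cast hk
  refine ⟨f, ?_, ?_⟩
  · intro i _
    have h1 : |x i| ≤ R := by
      have := PiLp.norm_apply_le x i
      rw [Real.norm_eq_abs] at this
      exact this.trans (hR x hxP)
    rw [hf i, abs_div, abs_of_pos hk', div_le_iff₀ hk'] at h1
    have h2 : |(f i : ℝ)| ≤ (⌈R * k⌉ : ℤ) := h1.trans (Int.le_ceil _)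
    have h3 : |f i| ≤ ⌈R * k⌉ := by exact_mod_cast h2
    exact abs_le.1 h3
  · ext i
    simp [hf i]

lemma exists_edge {E : Type*} [AddCommGroup E] [Module ℝ E] (T : Finset E) (x : E)
    (hx : x ∈ convexHull ℝ (T : Set E))
    (hxne : x ∉ (convexHull ℝ (T : Set E)).extremePoints ℝ) :
    ∃ v ∈ T, ∃ w ∈ T, v ≠ w ∧ ∀ y ∈ segment ℝ v w, ∃ z ∈ convexHull ℝ (T : Set E),
      ∃ ε : ℝ, 0 < ε ∧ ε < 1 ∧ x = ε • y + (1 - ε) • z := by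
  classical
  -- weights with two positive entries
  obtain ⟨c, hc0, hc1, hcx, v, hv, w, hw, hvw, hcv, hcw⟩ : ∃ c : E → ℝ, (∀ t ∈ T, 0 ≤ c t) ∧
      ∑ t ∈ T, c t = 1 ∧ ∑ t ∈ T, c t • t = x ∧
      ∃ v ∈ T, ∃ w ∈ T, v ≠ w ∧ 0 < c v ∧ 0 < c w := by
    rw [mem_extremePoints] at hxne
    push Not at hxne
    obtain ⟨a, ha, b, hb, hxab, hne⟩ := hxne hx
    have hab : a ≠ b := by
      rintro rfl
      rw [openSegment_same] at hxab
      exact hne hxab.symm hxab.symm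
    obtain ⟨p, q, hp, hq, hpq, rfl⟩ := hxab
    rw [Finset.mem_convexHull'] at ha hb
    obtain ⟨α, hα0, hα1, rfl⟩ := ha
    obtain ⟨β, hβ0, hβ1, rfl⟩ := hb
    refine ⟨fun t => p * α t + q * β t, ?_, ?_, ?_, ?_⟩
    · intro t ht
      have := hα0 t ht
      have := hβ0 t ht
      positivity
    · rw [Finset.sum_add_distrib, ← Finset.mul_sum, ← Finset.mul_sum, hα1, hβ1]; linarith
    · simp only [add_smul, mul_smul, Finset.sum_add_distrib, Finset.smul_sum]
    · by_contra hcon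
      push Not at hcon
      have key : ∀ t ∈ T, (0 < α t ∨ 0 < β t) → 0 < p * α t + q * β t := by
        intro t ht h
        have := hα0 t ht
        have := hβ0 t ht
        rcases h with h | h <;> positivity
      obtain ⟨v, hv, hαv⟩ : ∃ v ∈ T, 0 < α v := by
        by_contra h
        push Not at h
        have := Finset.sum_nonpos h
        linarith
      have hz : ∀ t ∈ T, t ≠ v → α t = 0 ∧ β t = 0 := by
        intro t ht htv
        have := hcon v hv t ht htv.symm (key v hv (Or.inl hαv))
        have h1 := hα0 t ht
        have h2 := hβ0 t ht
        constructor
        · by_contra h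
          have := key t ht (Or.inl (lt_of_le_of_ne h1 (Ne.symm h)))
          linarith
        · by_contra h
          have := key t ht (Or.inr (lt_of_le_of_ne h2 (Ne.symm h)))
          linarith
      apply hab
      rw [Finset.sum_eq_single_of_mem v hv (fun t ht h => (hz t ht h).1)] at hα1
      rw [Finset.sum_eq_single_of_mem v hv (fun t ht h => (hz t ht h).2)] at hβ1
      apply Finset.sum_congr rfl
      intro t ht
      by_cases h : t = v
      · rw [h, hα1, hβ1]
      · rw [(hz t ht h).1, (hz t ht h).2]
  refine ⟨v, hv, w, hw, hvw, ?_⟩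
  rintro y ⟨p, q, hp, hq, hpq, rfl⟩
  set ε := min (c v) (c w) / 2 with hε
  have hmin : 0 < min (c v) (c w) := lt_min hcv hcw
  have hε0 : 0 < ε := by positivity
  have hεv : ε < c v := by have := min_le_left (c v) (c w); linarith
  have hεw : ε < c w := by have := min_le_right (c v) (c w); linarith
  have hcv1 : c v ≤ 1 := by rw [← hc1]; exact Finset.single_le_sum hc0 hv
  have hε1 : ε < 1 := by linarith
  have h1ε : 0 < 1 - ε := by linarith
  let d : E → ℝ := fun t => (if t = v then p else 0) + (if t = w then q else 0)
  have hd1 : ∑ t ∈ T, d t = 1 := by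
    simp [d, Finset.sum_add_distrib, hv, hw, hpq]
  have hd2 : ∑ t ∈ T, d t • t = p • v + q • w := by
    simp [d, Finset.sum_add_distrib, add_smul, ite_smul, hv, hw]
  refine ⟨(1 - ε)⁻¹ • (x - ε • (p • v + q • w)), ?_, ε, hε0, hε1, ?_⟩
  · rw [Finset.mem_convexHull']
    refine ⟨fun t => (1 - ε)⁻¹ * (c t - ε * d t), ?_, ?_, ?_⟩
    · intro t ht
      apply mul_nonneg (by positivity)
      have := hc0 t ht
      simp only [d]
      split_ifs with h1 h2 h2
      · exact absurd (h1.symm.trans h2) hvw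
      · subst h1; nlinarith
      · subst h2; nlinarith
      · simpa using this
    · rw [← Finset.mul_sum, Finset.sum_sub_distrib, ← Finset.mul_sum, hc1, hd1]
      field_simp
    · simp only [mul_smul, sub_smul]
      rw [← Finset.smul_sum, Finset.sum_sub_distrib, ← Finset.smul_sum, hcx, hd2]
  · rw [smul_inv_smul₀ h1ε.ne']
    abel

theorem betaKM_eq_max_of_not_starP
    (n : ℕ) (T : Finset (EuclideanSpace ℝ (Fin n))) (hT : ∀ x ∈ T, IsLatticePt x)
    (P : Set (EuclideanSpace ℝ (Fin n)))
    (hP : P = convexHull ℝ (T : Set (EuclideanSpace ℝ (Fin n))))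
    (h0 : (0 : EuclideanSpace ℝ (Fin n)) ∈ interior P)
    (xhat : EuclideanSpace ℝ (Fin n)) (hxP : xhat ∈ P)
    (hxne : xhat ∉ P.extremePoints ℝ)
    (hxmax : ∀ y ∈ P, gaugeNeg P y ≤ gaugeNeg P xhat)
    (m : ℕ) (hm : 0 < m) :
    ∃ k₀ : ℕ, ∀ k ≥ k₀, m ≤ (P ∩ latticeDiv n k).ncard ∧
      betaKM P k m = sSup (gaugeNeg P '' P) := by
  classical
  have hconv : Convex ℝ P := hP ▸ convex_convexHull ℝ _
  have hbdd : Bornology.IsBounded P := by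
    rw [hP, isBounded_convexHull]; exact T.finite_toSet.isBounded
  have h0P : (0 : EuclideanSpace ℝ (Fin n)) ∈ P := interior_subset h0
  have hg := gaugeNeg_eq_gauge P h0P
  have habs : Absorbent ℝ (-P) := by
    apply absorbent_nhds_zero
    have := neg_mem_nhds_zero (EuclideanSpace ℝ (Fin n)) (mem_interior_iff_mem_nhds.1 h0)
    exact this
  have hnonneg : ∀ y, 0 ≤ gaugeNeg P y := fun y => by rw [hg]; exact gauge_nonneg _
  obtain ⟨v, hv, w, hw, hvw, hseg⟩ := exists_edge T xhat (hP ▸ hxP) (hP ▸ hxne)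
  have hvP : v ∈ P := by rw [hP]; exact subset_convexHull ℝ _ hv
  have hwP : w ∈ P := by rw [hP]; exact subset_convexHull ℝ _ hw
  have hsegP : segment ℝ v w ⊆ P := hconv.segment_subset hvP hwP
  have hconst : ∀ y ∈ segment ℝ v w, gaugeNeg P y = gaugeNeg P xhat := by
    intro y hy
    apply le_antisymm (hxmax y (hsegP hy))
    obtain ⟨z, hz, ε, hε0, hε1, hx⟩ := hseg y hy
    rw [← hP] at hz
    have h1 : gaugeNeg P xhat ≤ ε * gaugeNeg P y + (1 - ε) * gaugeNeg P z := by
      conv_lhs => rw [hx]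
      rw [hg, hg, hg]
      refine (gauge_add_le hconv.neg habs _ _).trans ?_
      rw [gauge_smul_of_nonneg hε0.le, gauge_smul_of_nonneg (by linarith)]
      simp
    have h2 := hxmax z hz
    have h3 : (1 - ε) * gaugeNeg P z ≤ (1 - ε) * gaugeNeg P xhat :=
      mul_le_mul_of_nonneg_left h2 (by linarith)
    nlinarith
  have hsup : IsGreatest (gaugeNeg P '' P) (gaugeNeg P xhat) :=
    ⟨⟨xhat, hxP, rfl⟩, by rintro _ ⟨y, hy, rfl⟩; exact hxmax y hy⟩
  refine ⟨m, fun k hk => ?_⟩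
  have hk0 : 0 < k := lt_of_lt_of_le hm hk
  have hk' : (0 : ℝ) < k := by exact_mod_cast hk0
  let φ : ℕ → EuclideanSpace ℝ (Fin n) := fun j => v + ((j : ℝ) / k) • (w - v)
  have hφ : Function.Injective φ := by
    intro i j hij
    have h1 := smul_left_injective ℝ (sub_ne_zero.2 hvw.symm) (add_left_cancel hij)
    have h2 : (i : ℝ) = j := by
      field_simp at h1
      exact h1
    exact_mod_cast h2
  let F := (Finset.range m).image φ
  have hFcard : F.card = m := by
    rw [Finset.card_image_of_injective _ hφ, Finset.card_range]
  have hFseg : (F : Set (EuclideanSpace ℝ (Fin n))) ⊆ segment ℝ v w := by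
    intro y hy
    obtain ⟨j, hj, rfl⟩ := Finset.mem_image.1 (Finset.mem_coe.1 hy)
    rw [segment_eq_image']
    refine ⟨(j : ℝ) / k, ⟨by positivity, ?_⟩, rfl⟩
    rw [div_le_one hk']
    have := Finset.mem_range.1 hj
    exact_mod_cast (this.le.trans hk)
  have hFsub : (F : Set (EuclideanSpace ℝ (Fin n))) ⊆ P ∩ latticeDiv n k := by
    refine Set.subset_inter (hFseg.trans hsegP) ?_
    intro y hy
    obtain ⟨j, hj, rfl⟩ := Finset.mem_image.1 (Finset.mem_coe.1 hy)
    intro i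
    obtain ⟨a, ha⟩ := hT v hv i
    obtain ⟨b, hb⟩ := hT w hw i
    refine ⟨k * a + j * (b - a), ?_⟩
    simp only [φ, PiLp.add_apply, PiLp.smul_apply, PiLp.sub_apply, ha, hb, smul_eq_mul]
    push_cast
    field_simp
  refine ⟨?_, ?_⟩
  · rw [← hFcard, ← Set.ncard_coe_finset]
    exact Set.ncard_le_ncard hFsub (finite_lattice P hbdd k hk0)
  · rw [hsup.csSup_eq]
    apply IsGreatest.csSup_eq
    constructor
    · refine ⟨F, hFsub, hFcard, ?_⟩
      have hne : (F : Set (EuclideanSpace ℝ (Fin n))).Nonempty := by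
        rw [Finset.coe_nonempty, ← Finset.card_pos, hFcard]; exact hm
      have himg : gaugeNeg P '' (convexHull ℝ (F : Set (EuclideanSpace ℝ (Fin n))))
          = {gaugeNeg P xhat} := by
        apply Set.eq_singleton_iff_nonempty_unique_mem.2
        refine ⟨(convexHull_nonempty_iff.2 hne).image _, ?_⟩
        rintro _ ⟨y, hy, rfl⟩
        exact hconst y (convexHull_min hFseg (convex_segment v w) hy)
      rw [himg, csInf_singleton]
    · rintro r ⟨G, hG, hGc, rfl⟩
      obtain ⟨y, hy⟩ : G.Nonempty := by rw [← Finset.card_pos, hGc]; exact hm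
      refine (csInf_le ⟨0, ?_⟩ (Set.mem_image_of_mem _ (subset_convexHull ℝ _ hy))).trans 
        (hxmax y (hG hy).1)
      rintro _ ⟨z, _, rfl⟩
      exact hnonneg z
end

section
/- Let v₁,…,v_d ∈ ℤⁿ and let P := {y ∈ ℝⁿ : ⟨y, v_i⟩ ≥ −1 for all i = 1,…,d}; assume P is compact and that every extreme point of P lies in ℤⁿ. Then max_{x∈P} ‖x‖_{−P} ≥ 1, with equality if and only if P = −P; moreover, if P ≠ −P then max_{x∈P} ‖x‖_{−P} ≥ 2. -/
open scoped RealInnerProductSpace Pointwise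

theorem aux_neg_mem {n d : ℕ} (v : Fin d → EuclideanSpace ℝ (Fin n))
    (P : Set (EuclideanSpace ℝ (Fin n)))
    (hP : P = {y | ∀ i, -1 ≤ ⟪y, v i⟫}) (x : EuclideanSpace ℝ (Fin n)) (t : ℝ) (ht : 0 < t)
    (h : ∀ i, ⟪x, v i⟫ ≤ t) : -(t⁻¹ • x) ∈ P := by
  rw [hP]
  intro i
  rw [inner_neg_left, real_inner_smul_left]
  have := mul_le_mul_of_nonneg_left (h i) (inv_nonneg.2 ht.le)
  rw [inv_mul_cancel₀ ht.ne'] at this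
  linarith

theorem aux_mem_smul {n d : ℕ} (v : Fin d → EuclideanSpace ℝ (Fin n))
    (P : Set (EuclideanSpace ℝ (Fin n)))
    (hP : P = {y | ∀ i, -1 ≤ ⟪y, v i⟫}) (x : EuclideanSpace ℝ (Fin n)) (t : ℝ) (ht : 0 < t)
    (h : ∀ i, ⟪x, v i⟫ ≤ t) : x ∈ t • (-P) :=
  Set.mem_smul_set.2 ⟨t⁻¹ • x, Set.mem_neg.2 (aux_neg_mem v P hP x t ht h),
    smul_inv_smul₀ ht.ne' x⟩

theorem aux_sum {n d : ℕ} (v : Fin d → EuclideanSpace ℝ (Fin n))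
    (x : EuclideanSpace ℝ (Fin n)) (i : Fin d) :
    ⟪x, v i⟫ ≤ 1 + ∑ j, ‖x‖ * ‖v j‖ := by
  have h1 := real_inner_le_norm x (v i)
  have h2 := Finset.single_le_sum (f := fun j => ‖x‖ * ‖v j‖)
    (fun j _ => by positivity) (Finset.mem_univ i)
  linarith

theorem aux_pos {n d : ℕ} (v : Fin d → EuclideanSpace ℝ (Fin n))
    (x : EuclideanSpace ℝ (Fin n)) : 0 < 1 + ∑ j, ‖x‖ * ‖v j‖ := by
  have : 0 ≤ ∑ j, ‖x‖ * ‖v j‖ := Finset.sum_nonneg (fun j _ => by positivity)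
  linarith

theorem aux_le_gauge {n d : ℕ} (v : Fin d → EuclideanSpace ℝ (Fin n))
    (P : Set (EuclideanSpace ℝ (Fin n)))
    (hP : P = {y | ∀ i, -1 ≤ ⟪y, v i⟫}) (x : EuclideanSpace ℝ (Fin n)) (i : Fin d) :
    ⟪x, v i⟫ ≤ gaugeNeg P x := by
  apply le_csInf
  · exact ⟨_, (aux_pos v x).le, aux_mem_smul v P hP x _ (aux_pos v x) (aux_sum v x)⟩
  · rintro t ⟨ht, hx⟩
    obtain ⟨y, hy, rfl⟩ := Set.mem_smul_set.1 hx
    have hy' : -y ∈ P := hy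
    rw [hP] at hy'
    have := hy' i
    rw [inner_neg_left] at this
    rw [real_inner_smul_left]
    nlinarith

theorem aux_gauge_le {n : ℕ} (P : Set (EuclideanSpace ℝ (Fin n)))
    (x : EuclideanSpace ℝ (Fin n)) (t : ℝ) (ht : 0 ≤ t) (h : x ∈ t • (-P)) :
    gaugeNeg P x ≤ t :=
  csInf_le ⟨0, fun _ hs => hs.1⟩ ⟨ht, h⟩

theorem aux_int {n : ℕ} (x y : EuclideanSpace ℝ (Fin n)) (hx : IsLatticePt x)
    (hy : IsLatticePt y) : ∃ m : ℤ, ⟪x, y⟫ = m := by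
  choose a ha using hx
  choose b hb using hy
  refine ⟨∑ i, b i * a i, ?_⟩
  simp [PiLp.inner_apply, ha, hb]

/-- the convex content of Lemma 8.6 of the paper. For the compact
lattice polytope `P = {y : ⟨y, vᵢ⟩ ≥ −1 ∀ i}` with integral extreme points:
`max_P ‖·‖₋P ≥ 1`, with equality iff `P = −P`; and if `P ≠ −P` then
`max_P ‖·‖₋P ≥ 2`. -/
theorem max_gaugeNeg_ge_one
    (n d : ℕ) (hn : 0 < n) (v : Fin d → EuclideanSpace ℝ (Fin n))
    (hv : ∀ i, IsLatticePt (v i))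
    (P : Set (EuclideanSpace ℝ (Fin n)))
    (hP : P = {y | ∀ i, -1 ≤ ⟪y, v i⟫}) (hPc : IsCompact P)
    (hext : ∀ u ∈ P.extremePoints ℝ, IsLatticePt u) :
    1 ≤ sSup (gaugeNeg P '' P) ∧
    (sSup (gaugeNeg P '' P) = 1 ↔ P = -P) ∧
    (P ≠ -P → 2 ≤ sSup (gaugeNeg P '' P)) := by
  have h0 : (0 : EuclideanSpace ℝ (Fin n)) ∈ P := by rw [hP]; intro i; simp
  obtain ⟨C, hC⟩ := hPc.isBounded.exists_norm_le
  have hbdd : BddAbove (gaugeNeg P '' P) := by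
    refine ⟨1 + ∑ j, C * ‖v j‖, ?_⟩
    rintro _ ⟨x, hx, rfl⟩
    refine (aux_gauge_le P x _ (aux_pos v x).le
      (aux_mem_smul v P hP x _ (aux_pos v x) (aux_sum v x))).trans ?_
    gcongr
    exact hC x hx
  have hM : ∀ x ∈ P, ∀ i, ⟪x, v i⟫ ≤ sSup (gaugeNeg P '' P) := fun x hx i =>
    (aux_le_gauge v P hP x i).trans (le_csSup hbdd ⟨x, hx, rfl⟩)
  have hconv : Convex ℝ P := by
    rw [hP]
    intro x hx y hy a b ha hb hab i
    have h1 := hx i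
    have h2 := hy i
    rw [inner_add_left, real_inner_smul_left, real_inner_smul_left]
    nlinarith
  have h1 : 1 ≤ sSup (gaugeNeg P '' P) := by
    by_contra! hlt
    obtain ⟨x, hx, hmax⟩ := hPc.exists_isMaxOn ⟨0, h0⟩ continuous_norm.continuousOn
    have hxpos : 0 < ‖x‖ := by
      let e : EuclideanSpace ℝ (Fin n) := EuclideanSpace.single ⟨0, hn⟩ 1
      have he : ‖e‖ = 1 := by simp [e]
      have hm := aux_neg_mem v P hP e _ (aux_pos v e) (aux_sum v e)
      have h3 : ‖-((1 + ∑ j, ‖e‖ * ‖v j‖)⁻¹ • e)‖ ≤ ‖x‖ := hmax hm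
      refine lt_of_lt_of_le ?_ h3
      rw [norm_neg, norm_smul, he, mul_one, norm_pos_iff]
      have := aux_pos v e
      rw [he] at this
      exact inv_ne_zero this.ne'
    set t := max (sSup (gaugeNeg P '' P)) (1/2) with ht
    have ht0 : 0 < t := lt_of_lt_of_le (by norm_num) (le_max_right _ _)
    have ht1 : t < 1 := max_lt hlt (by norm_num)
    have hm := aux_neg_mem v P hP x t ht0 (fun i => (hM x hx i).trans (le_max_left _ _))
    have h3 : ‖-(t⁻¹ • x)‖ ≤ ‖x‖ := hmax hm
    rw [norm_neg, norm_smul, norm_inv, Real.norm_of_nonneg ht0.le] at h3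
    have : 1 < t⁻¹ := (one_lt_inv₀ ht0).2 ht1
    nlinarith
  have h2 : P ≠ -P → 2 ≤ sSup (gaugeNeg P '' P) := by
    intro hne
    by_contra! hlt
    apply hne
    have hsub : P ⊆ -P := by
      have hkm := closure_convexHull_extremePoints hPc hconv
      conv_lhs => rw [← hkm]
      refine closure_minimal (convexHull_min ?_ hconv.neg) hPc.neg.isClosed
      intro u hu
      have huP : u ∈ P := hu.1
      rw [Set.mem_neg, hP]
      intro i
      obtain ⟨m, hm⟩ := aux_int u (v i) (hext u hu) (hv i)
      have h4 := (hM u huP i).trans_lt hlt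
      rw [hm] at h4
      have h5 : m < 2 := by exact_mod_cast h4
      have h6 : m ≤ 1 := by omega
      have h7 : (m : ℝ) ≤ 1 := by exact_mod_cast h6
      rw [inner_neg_left, hm]
      linarith
    refine hsub.antisymm ?_
    intro x hx
    have := hsub (Set.mem_neg.1 hx)
    simpa using this
  refine ⟨h1, ⟨fun h => ?_, fun h => ?_⟩, h2⟩
  · by_contra hne
    linarith [h2 hne]
  · refine le_antisymm (csSup_le ⟨_, 0, h0, rfl⟩ ?_) h1
    rintro _ ⟨x, hx, rfl⟩
    refine aux_gauge_le P x 1 zero_le_one ?_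
    rw [one_smul, ← h]
    exact hx
end
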